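/- Let T be a compactly generated triangulated category with a single compact generator G, and define the generating sequence G by G^n := {Σ^{n}G} for all n ∈ ℤ. Then: (i) T is weakly co-approximable if and only if T is weakly G-approximable; (ii) T is co-approximable if and only if T is G-approximable; and the analogous equivalences hold between (weak) co-quasiapproximability and (weak) G-quasiapproximability. -/

import Mathlib

namespace GApprox

open CategoryTheory CategoryTheory.Limits CategoryTheory.Pretriangulated

universe w v u

variable (C : Type u) [Category.{v} C] [HasZeroObject C] [HasShift C ℤ]
  [Preadditive C] [∀ n : ℤ, (shiftFunctor C n).Additive] [Pretriangulated C]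
  [HasCoproducts.{v} C]

/-- The right orthogonal of a class of objects. -/
def rOrth (A : Set C) : Set C := {X | ∀ a ∈ A, ∀ f : a ⟶ X, f = 0}

/-- The left orthogonal of a class of objects. -/
def lOrth (A : Set C) : Set C := {X | ∀ a ∈ A, ∀ f : X ⟶ a, f = 0}

/-- `Hom(A, B) = 0`. -/
def homZero (A B : Set C) : Prop := ∀ a ∈ A, ∀ b ∈ B, ∀ f : a ⟶ b, f = 0

/-- The star operation `A ⋆ B`: objects `Y` admitting a distinguished triangle
`X ⟶ Y ⟶ Z ⟶ ΣX` with `X ∈ A` and `Z ∈ B`. -/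
def starSet (A B : Set C) : Set C :=
  {Y | ∃ (X Z : C) (f : X ⟶ Y) (g : Y ⟶ Z) (h : Z ⟶ X⟦(1 : ℤ)⟧),
    Triangle.mk f g h ∈ (distTriang C) ∧ X ∈ A ∧ Z ∈ B}

/-- The (strictly full) shift `Σⁿ A` of a class of objects. -/
def shiftSet (n : ℤ) (A : Set C) : Set C :=
  {X | ∃ a ∈ A, Nonempty (X ≅ (shiftFunctor C n).obj a)}

/-- An object is compact if any map to a coproduct factors through a finite subcoproduct. -/
def IsCompactObj (X : C) : Prop :=
  ∀ (α : Type v) (f : α → C) (g : X ⟶ ∐ f),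
    ∃ (s : Finset α) (h : X ⟶ ∐ (fun i : {a : α // a ∈ s} => f i.1)),
      g = h ≫ Sigma.desc (fun i => Sigma.ι f i.1)

/-- The class of compact objects `T^c`. -/
def compacts : Set C := {X | IsCompactObj C X}

/-- The category is compactly generated. -/
def CompactlyGenerated : Prop :=
  ∀ X : C, (∀ K ∈ compacts C, ∀ f : K ⟶ X, f = 0) → IsZero X

/-- Closure under direct summands (retracts), `smd`. -/
def smd (A : Set C) : Set C :=
  {X | ∃ Y ∈ A, ∃ (i : X ⟶ Y) (r : Y ⟶ X), i ≫ r = 𝟙 X}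

/-- Closure of a class of objects under finite direct sums and extensions (`coprod`). -/
inductive extClosure (U : Set C) : C → Prop
  | of {X : C} : X ∈ U → extClosure U X
  | zero {X : C} : IsZero X → extClosure U X
  | ext {X Y Z : C} (f : X ⟶ Y) (g : Y ⟶ Z) (h : Z ⟶ X⟦(1 : ℤ)⟧) :
      Triangle.mk f g h ∈ (distTriang C) → extClosure U X → extClosure U Z → extClosure U Y

/-- Closure of a class of objects under arbitrary coproducts, extensions and
direct summands. -/
inductive bigClosure (U : Set C) : C → Prop
  | of {X : C} : X ∈ U → bigClosure U X
  | zero {X : C} : IsZero X → bigClosure U X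
  | coprod {α : Type v} (f : α → C) :
      (∀ i, bigClosure U (f i)) → ∀ {X : C}, (X ≅ ∐ f) → bigClosure U X
  | ext {X Y Z : C} (f : X ⟶ Y) (g : Y ⟶ Z) (h : Z ⟶ X⟦(1 : ℤ)⟧) :
      Triangle.mk f g h ∈ (distTriang C) → bigClosure U X → bigClosure U Z → bigClosure U Y
  | retract {X Y : C} (i : X ⟶ Y) (r : Y ⟶ X) :
      i ≫ r = 𝟙 X → bigClosure U Y → bigClosure U X

/-- Closure of a class of objects under finite direct sums, `add`. -/
def addClosure (U : Set C) : Set C :=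
  {X | ∃ (n : ℕ) (f : ULift.{v} (Fin n) → C), (∀ i, f i ∈ U) ∧ Nonempty (X ≅ ∐ f)}

/-- Closure of a class of objects under arbitrary coproducts, `Add`. -/
def bigAddClosure (U : Set C) : Set C :=
  {X | ∃ (α : Type v) (f : α → C), (∀ i, f i ∈ U) ∧ Nonempty (X ≅ ∐ f)}

/-- `coprod_n(U)`. -/
def coprodPow (U : Set C) : ℕ → Set C
  | 0 => {X | IsZero X}
  | n + 1 => starSet C (addClosure C U) (coprodPow U n)

/-- `Coprod_n(U)`. -/
def coprodPowBig (U : Set C) : ℕ → Set C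
  | 0 => {X | IsZero X}
  | n + 1 => starSet C (bigAddClosure C U) (coprodPowBig U n)

/-- `G[a,b] = ∪ { G^m : a ≤ m ≤ b }`. -/
def unionIcc (G : ℤ → Set C) (a b : ℤ) : Set C := ⋃ m ∈ Set.Icc a b, G m

/-- `G(-∞,b] = ∪ { G^m : m ≤ b }`. -/
def unionIic (G : ℤ → Set C) (b : ℤ) : Set C := ⋃ m ∈ Set.Iic b, G m

/-- `G(-∞,∞) = ∪ { G^m : m ∈ ℤ }`. -/
def unionAll (G : ℤ → Set C) : Set C := ⋃ m : ℤ, G m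

/-- `G^{[a,b]} = smd(coprod(G[a,b]))`. -/
def gInt (G : ℤ → Set C) (a b : ℤ) : Set C :=
  smd C {X | extClosure C (unionIcc C G a b) X}

/-- `G^{(-∞,b]} = smd(coprod(G(-∞,b]))`. -/
def gIic (G : ℤ → Set C) (b : ℤ) : Set C :=
  smd C {X | extClosure C (unionIic C G b) X}

/-- `G^{[a,b]}_k = smd(coprod_k(G[a,b]))`. -/
def gIntPow (G : ℤ → Set C) (a b k : ℤ) : Set C :=
  smd C (coprodPow C (unionIcc C G a b) k.toNat)

/-- `Ḡ^{[a,b]}`. -/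
def gBarInt (G : ℤ → Set C) (a b : ℤ) : Set C :=
  {X | bigClosure C (unionIcc C G a b) X}

/-- `Ḡ^{(-∞,b]}`. -/
def gBarIic (G : ℤ → Set C) (b : ℤ) : Set C :=
  {X | bigClosure C (unionIic C G b) X}

/-- `Ḡ^{[a,b]}_k = smd(Coprod_k(G[a,b]))`. -/
def gBarIntPow (G : ℤ → Set C) (a b k : ℤ) : Set C :=
  smd C (coprodPowBig C (unionIcc C G a b) k.toNat)

/-- `M^G_n := G^{(-∞,-n]}`. -/
def MG (G : ℤ → Set C) (n : ℤ) : Set C := gIic C G (-n)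

/-- `R^G_n := ⊥((M^G_n)^⊥)`, orthogonals taken in the whole category. -/
def RG (G : ℤ → Set C) (n : ℤ) : Set C := lOrth C (rOrth C (MG C G n))

/-- A pre-generating sequence. -/
structure IsPreGenSeq (G : ℤ → Set C) : Prop where
  compact : ∀ i : ℤ, G i ⊆ compacts C
  generates : smd C {X | extClosure C (unionAll C G) X} = compacts C

/-- A generating sequence. -/
structure IsGenSeq (G : ℤ → Set C) extends IsPreGenSeq C G : Prop where
  shift_cond : ∀ n : ℤ,
    shiftSet C (-1) (G n) ∪ G n ∪ shiftSet C 1 (G n) ⊆ gInt C G (n - 1) (n + 1)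

/-- A finite generating sequence. -/
structure IsFinGenSeq (G : ℤ → Set C) extends IsGenSeq C G : Prop where
  finite : ∀ i : ℤ, (G i).Finite

/-- ℕ-equivalence of generating sequences. -/
def GenSeqNEquiv (G G' : ℤ → Set C) : Prop :=
  ∃ N : ℤ, 0 ≤ N ∧ (∀ n : ℤ, G' n ⊆ gInt C G (n - N) (n + N)) ∧
    ∀ n : ℤ, G n ⊆ gInt C G' (n - N) (n + N)

/-- ℕ-equivalence of (extended good) metrics. -/
def MetricNEquiv (M N : ℤ → Set C) : Prop :=
  ∃ n : ℤ, 0 ≤ n ∧ (∀ i : ℤ, M (i + n) ⊆ N i) ∧ ∀ i : ℤ, N (i + n) ⊆ M i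

/-- An extended good metric. -/
structure IsExtGoodMetric (M : ℤ → Set C) : Prop where
  zero_mem : ∀ (n : ℤ) (X : C), IsZero X → X ∈ M n
  iso_closed : ∀ (n : ℤ) ⦃X Y : C⦄, (X ≅ Y) → X ∈ M n → Y ∈ M n
  star_subset : ∀ n : ℤ, starSet C (M n) (M n) ⊆ M n
  shift_one : ∀ n : ℤ, shiftSet C 1 (M (n + 1)) ⊆ M n
  antitone : ∀ n : ℤ, M (n + 1) ⊆ M n
  shift_neg_one : ∀ n : ℤ, shiftSet C (-1) (M (n + 1)) ⊆ M n

/-- An orthogonal metric. -/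
structure IsOrthMetric (M : ℤ → Set C) extends IsExtGoodMetric C M : Prop where
  orth : ∀ n : ℤ, lOrth C (rOrth C (M n)) = M n

/-- The closure of the compacts `T̄^c := ∩ₙ T^c ⋆ Rₙ`. -/
def closCompacts (Rm : ℤ → Set C) : Set C := ⋂ n : ℤ, starSet C (compacts C) (Rm n)

/-- `(T, R, A)` is `G`-preapproximable. -/
structure IsGPreApprox (G Rm : ℤ → Set C) (A : ℤ) : Prop where
  orthMetric : IsOrthMetric C Rm
  A_pos : 0 < A
  cond0 : ∀ i : ℤ, MG C G i ⊆ ⋃ n ∈ {n : ℤ | |n| ≤ A}, shiftSet C n (MG C G (i + 1))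
  cond1 : ∀ i : ℤ, MG C G (i + A) ⊆ Rm i ∩ compacts C
  cond2 : ∀ n : ℤ, ∃ N : ℤ, ∀ i : ℤ, N ≤ i → homZero C (G n) (Rm i)

/-- There is a distinguished triangle `E ⟶ F ⟶ D ⟶ ΣE` with `E ∈ S` and `D ∈ D`. -/
def approxTriangle (F : C) (S D : Set C) : Prop :=
  ∃ (E Dd : C) (f : E ⟶ F) (g : F ⟶ Dd) (h : Dd ⟶ E⟦(1 : ℤ)⟧),
    Triangle.mk f g h ∈ (distTriang C) ∧ E ∈ S ∧ Dd ∈ D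

/-- `(T, R, A)` is weakly `G`-approximable. -/
structure IsWeakGApprox (G Rm : ℤ → Set C) (A : ℤ) extends IsGPreApprox C G Rm A : Prop where
  hom_vanish : ∀ n i : ℤ, A ≤ n + i → homZero C (G n) (Rm i)
  approx : ∀ i : ℤ, ∀ F ∈ Rm i,
    approxTriangle C F (gBarInt C G (-A - i) (A - i)) (Rm (i + 1))

/-- `(T, R, A)` is `G`-approximable. -/
structure IsGApprox (G Rm : ℤ → Set C) (A : ℤ) extends IsWeakGApprox C G Rm A : Prop where
  approx' : ∀ i : ℤ, ∀ F ∈ Rm i,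
    approxTriangle C F (gBarIntPow C G (-A - i) (A - i) A) (Rm (i + 1))

/-- `(T, R, A)` is weakly `G`-quasiapproximable. -/
structure IsWeakGQuasiApprox (G Rm : ℤ → Set C) (A : ℤ) extends IsGPreApprox C G Rm A : Prop where
  hom_vanish : ∀ n i : ℤ, A ≤ n + i → homZero C (G n) (Rm i)
  approx : ∀ i : ℤ, ∀ F ∈ Rm i ∩ closCompacts C Rm,
    approxTriangle C F (gBarInt C G (-A - i) (A - i)) (Rm (i + 1) ∩ closCompacts C Rm)

/-- `(T, R, A)` is `G`-quasiapproximable. -/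
structure IsGQuasiApprox (G Rm : ℤ → Set C) (A : ℤ) extends IsWeakGQuasiApprox C G Rm A : Prop where
  approx' : ∀ i : ℤ, ∀ F ∈ Rm i ∩ closCompacts C Rm,
    approxTriangle C F (gBarIntPow C G (-A - i) (A - i) A) (Rm (i + 1) ∩ closCompacts C Rm)

/-- The coproduct of a sequence of objects. -/
noncomputable def seqCoprod (E : ℕ → C) : C := ∐ (fun n : ULift.{v} ℕ => E n.down)

/-- The canonical inclusion into the coproduct of a sequence. -/
noncomputable def seqInj (E : ℕ → C) (n : ℕ) : E n ⟶ seqCoprod C E :=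
  Sigma.ι (fun n : ULift.{v} ℕ => E n.down) (ULift.up n)

/-- The map `1 - shift` on the coproduct of a sequence. -/
noncomputable def oneMinusShift (E : ℕ → C) (e : ∀ n, E n ⟶ E (n + 1)) :
    seqCoprod C E ⟶ seqCoprod C E :=
  Sigma.desc (fun n => seqInj C E n.down - e n.down ≫ seqInj C E (n.down + 1))

/-- `H`, equipped with `π`, `δ`, is a homotopy colimit of the sequence `E`. -/
def IsHocolim (E : ℕ → C) (e : ∀ n, E n ⟶ E (n + 1)) (H : C)
    (π : seqCoprod C E ⟶ H) (δ : H ⟶ (seqCoprod C E)⟦(1 : ℤ)⟧) : Prop :=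
  Triangle.mk (oneMinusShift C E e) π δ ∈ (distTriang C)

/-- A single compact generator. -/
def IsCompactGenerator (G₀ : C) : Prop :=
  IsCompactObj C G₀ ∧ ∀ X : C, (∀ n : ℤ, ∀ f : (shiftFunctor C n).obj G₀ ⟶ X, f = 0) → IsZero X

/-- The strictly full subcategory `{Σʲ G₀}`. -/
def singletonShift (G₀ : C) (j : ℤ) : Set C :=
  {X | Nonempty (X ≅ (shiftFunctor C j).obj G₀)}

/-- The generating sequence `Gⁿ := {Σ⁻ⁿ G₀}`. -/
def genSeqNeg (G₀ : C) (n : ℤ) : Set C := singletonShift C G₀ (-n)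

/-- The generating sequence `Gⁿ := {Σⁿ G₀}`. -/
def genSeqPos (G₀ : C) (n : ℤ) : Set C := singletonShift C G₀ n

/-- A co-t-structure `(T^{≥0}, T^{≤0}) = (U, V)`. -/
structure IsCoTStructure (U V : Set C) : Prop where
  smd_closed_ge : smd C U ⊆ U
  smd_closed_le : smd C V ⊆ V
  iso_closed_ge : ∀ ⦃X Y : C⦄, (X ≅ Y) → X ∈ U → Y ∈ U
  iso_closed_le : ∀ ⦃X Y : C⦄, (X ≅ Y) → X ∈ V → Y ∈ V
  shift_le : shiftSet C 1 V ⊆ V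
  shift_ge : U ⊆ shiftSet C 1 U
  orthogonal : homZero C U (shiftSet C 1 V)
  exists_triangle : ∀ t : C, ∃ (u v : C) (f : u ⟶ t) (g : t ⟶ v) (h : v ⟶ u⟦(1 : ℤ)⟧),
    Triangle.mk f g h ∈ (distTriang C) ∧ u ∈ U ∧ v ∈ shiftSet C 1 V

/-- `T^+_c := ∩ₙ (T^c ⋆ Σ⁻ⁿ T^{≥0})`, for the co-aisle `U = T^{≥0}`. -/
def TPlusC (U : Set C) : Set C := ⋂ n : ℤ, starSet C (compacts C) (shiftSet C (-n) U)

/-- `T` is weakly co-approximable. -/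
def WeaklyCoApproximable : Prop :=
  ∃ (G₀ : C) (A : ℤ) (U V : Set C), IsCompactGenerator C G₀ ∧ 0 < A ∧
    IsCoTStructure C U V ∧
    (shiftFunctor C (-A)).obj G₀ ∈ U ∧
    homZero C (singletonShift C G₀ A) U ∧
    ∀ F ∈ U, approxTriangle C F (gBarInt C (genSeqPos C G₀) (-A) A) (shiftSet C (-1) U)

/-- `T` is co-approximable. -/
def CoApproximable : Prop :=
  ∃ (G₀ : C) (A : ℤ) (U V : Set C), IsCompactGenerator C G₀ ∧ 0 < A ∧
    IsCoTStructure C U V ∧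
    (shiftFunctor C (-A)).obj G₀ ∈ U ∧
    homZero C (singletonShift C G₀ A) U ∧
    ∀ F ∈ U, approxTriangle C F (gBarIntPow C (genSeqPos C G₀) (-A) A A) (shiftSet C (-1) U)

/-- `T` is weakly co-quasiapproximable. -/
def WeaklyCoQuasiApproximable : Prop :=
  ∃ (G₀ : C) (A : ℤ) (U V : Set C), IsCompactGenerator C G₀ ∧ 0 < A ∧
    IsCoTStructure C U V ∧
    (shiftFunctor C (-A)).obj G₀ ∈ U ∧
    homZero C (singletonShift C G₀ A) U ∧
    ∀ F ∈ U ∩ TPlusC C U, approxTriangle C F (gBarInt C (genSeqPos C G₀) (-A) A)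
      (shiftSet C (-1) U ∩ TPlusC C U)

/-- `T` is co-quasiapproximable. -/
def CoQuasiApproximable : Prop :=
  ∃ (G₀ : C) (A : ℤ) (U V : Set C), IsCompactGenerator C G₀ ∧ 0 < A ∧
    IsCoTStructure C U V ∧
    (shiftFunctor C (-A)).obj G₀ ∈ U ∧
    homZero C (singletonShift C G₀ A) U ∧
    ∀ F ∈ U ∩ TPlusC C U, approxTriangle C F (gBarIntPow C (genSeqPos C G₀) (-A) A A)
      (shiftSet C (-1) U ∩ TPlusC C U)

/-!
A co-t-structure gives the metric `n ↦ Σ⁻ⁿ T^{≥0}`, and replacing its compact generator by `G` only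
changes the constant `A`, since each of two compact generators is built from the other in finitely
many steps. Conversely, iterating the approximations of an object gives a tower whose homotopy
colimit vanishes. Hence the metric is equivalent, up to a shift of the index, to the one defined by
orthogonality to the `ΣᵐG`, and the degree-zero term of the latter is the co-aisle of a
co-t-structure because `G` is compact.

`Pretriangulated` does not provide the octahedral axiom, which usually controls the cone of a
composite and the number of extension steps. Instead, cones are compared through the objects they
are orthogonal to, and the number of steps in a tower is bounded by composing ghost maps.
-/

open scoped ZeroObject

/-! ### Distinguished triangles -/

section Triangles

variable {T : Type u} [Category.{v} T] [HasZeroObject T] [HasShift T ℤ] [Preadditive T]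
  [∀ n : ℤ, (shiftFunctor T n).Additive] [Pretriangulated T]

/-- The triangle with morphisms `f`, `g`, `h` is distinguished. Spelling a triangle through its
three morphisms lets the exactness lemmas speak of `f`, `g`, `h` and not of projections. -/
abbrev IsDist {X Y Z : T} (f : X ⟶ Y) (g : Y ⟶ Z) (h : Z ⟶ X⟦(1 : ℤ)⟧) : Prop :=
  Triangle.mk f g h ∈ distTriang T

namespace IsDist

variable {X Y Z W X' Y' Z' : T} {f : X ⟶ Y} {g : Y ⟶ Z} {h : Z ⟶ X⟦(1 : ℤ)⟧}
  {f' : X' ⟶ Y'} {g' : Y' ⟶ Z'} {h' : Z' ⟶ X'⟦(1 : ℤ)⟧}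

lemma rotate (H : IsDist f g h) : IsDist g h (-f⟦(1 : ℤ)⟧') := rot_of_distTriang _ H

lemma comp_zero₁₂ (H : IsDist f g h) : f ≫ g = 0 := comp_distTriang_mor_zero₁₂ _ H

lemma comp_zero₂₃ (H : IsDist f g h) : g ≫ h = 0 := comp_distTriang_mor_zero₂₃ _ H

lemma comp_zero₃₁ (H : IsDist f g h) : h ≫ f⟦(1 : ℤ)⟧' = 0 := comp_distTriang_mor_zero₃₁ _ H

lemma yoneda_exact₂ (H : IsDist f g h) (φ : Y ⟶ W) (hφ : f ≫ φ = 0) :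
    ∃ ψ : Z ⟶ W, φ = g ≫ ψ :=
  Triangle.yoneda_exact₂ _ H φ hφ

lemma yoneda_exact₃ (H : IsDist f g h) (φ : Z ⟶ W) (hφ : g ≫ φ = 0) :
    ∃ ψ : X⟦(1 : ℤ)⟧ ⟶ W, φ = h ≫ ψ :=
  Triangle.yoneda_exact₃ _ H φ hφ

lemma yoneda_exact_shift₁ (H : IsDist f g h) (φ : X⟦(1 : ℤ)⟧ ⟶ W) (hφ : h ≫ φ = 0) :
    ∃ ψ : Y⟦(1 : ℤ)⟧ ⟶ W, φ = f⟦(1 : ℤ)⟧' ≫ ψ := by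
  obtain ⟨ψ, rfl⟩ := H.rotate.yoneda_exact₃ φ hφ
  exact ⟨-ψ, by simp⟩

lemma yoneda_exact_shift₂ (H : IsDist f g h) (φ : Y⟦(1 : ℤ)⟧ ⟶ W) (hφ : f⟦(1 : ℤ)⟧' ≫ φ = 0) :
    ∃ ψ : Z⟦(1 : ℤ)⟧ ⟶ W, φ = g⟦(1 : ℤ)⟧' ≫ ψ :=
  H.rotate.yoneda_exact_shift₁ φ (by simp [hφ])

lemma coyoneda_exact₂ (H : IsDist f g h) (φ : W ⟶ Y) (hφ : φ ≫ g = 0) :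
    ∃ ψ : W ⟶ X, φ = ψ ≫ f :=
  Triangle.coyoneda_exact₂ _ H φ hφ

lemma coyoneda_exact₃ (H : IsDist f g h) (φ : W ⟶ Z) (hφ : φ ≫ h = 0) :
    ∃ ψ : W ⟶ Y, φ = ψ ≫ g :=
  Triangle.coyoneda_exact₃ _ H φ hφ

lemma exists_mor₁ (H : IsDist f g h) (H' : IsDist f' g' h') (b : Y ⟶ Y') (c : Z ⟶ Z')
    (comm : g ≫ c = b ≫ g') :
    ∃ a : X ⟶ X', f ≫ b = a ≫ f' ∧ h ≫ a⟦(1 : ℤ)⟧' = c ≫ h' :=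
  complete_distinguished_triangle_morphism₁ _ _ H H' b c comm

lemma exists_mor₂ (H : IsDist f g h) (H' : IsDist f' g' h') (a : X ⟶ X') (c : Z ⟶ Z')
    (comm : h ≫ a⟦(1 : ℤ)⟧' = c ≫ h') :
    ∃ b : Y ⟶ Y', f ≫ b = a ≫ f' ∧ g ≫ c = b ≫ g' :=
  complete_distinguished_triangle_morphism₂ _ _ H H' a c comm

lemma of_iso₂ (H : IsDist f g h) (e : Y ≅ Y') : IsDist (f ≫ e.hom) (e.inv ≫ g) h :=
  isomorphic_distinguished _ H _ (Triangle.isoMk _ _ (Iso.refl _) e.symm (Iso.refl _)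
    (show (f ≫ e.hom) ≫ e.inv = 𝟙 X ≫ f by simp) (show (e.inv ≫ g) ≫ 𝟙 Z = e.inv ≫ g by simp)
    (show h ≫ (𝟙 X)⟦(1 : ℤ)⟧' = 𝟙 Z ≫ h by simp))

lemma shift (H : IsDist f g h) (n : ℤ) :
    ∃ (f' : X⟦n⟧ ⟶ Y⟦n⟧) (g' : Y⟦n⟧ ⟶ Z⟦n⟧) (h' : Z⟦n⟧ ⟶ X⟦n⟧⟦(1 : ℤ)⟧), IsDist f' g' h' :=
  ⟨_, _, _, Triangle.shift_distinguished _ H n⟩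

lemma invRotate (H : IsDist f g h) :
    ∃ (a : Z⟦(-1 : ℤ)⟧ ⟶ X) (c : Y ⟶ Z⟦(-1 : ℤ)⟧⟦(1 : ℤ)⟧), IsDist a f c :=
  ⟨_, _, inv_rot_of_distTriang _ H⟩

end IsDist

lemma isDist_id_zero (X : T) : IsDist (𝟙 X) (0 : X ⟶ 0) 0 := contractible_distinguished X

lemma isDist_zero_id (X : T) : IsDist (0 : 0 ⟶ X) (𝟙 X) 0 := contractible_distinguished₁ X

lemma isDist_biprod (X Y : T) : IsDist (biprod.inl : X ⟶ X ⊞ Y) biprod.snd 0 :=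
  binaryBiproductTriangle_distinguished X Y

end Triangles

/-! ### Orthogonal objects -/

section HomOrth

variable {T : Type u} [Category.{v} T] [Preadditive T]

/-- `Hom(X, Y) = 0`. -/
def HomOrth (X Y : T) : Prop := ∀ f : X ⟶ Y, f = 0

namespace HomOrth

variable {X X' Y Y' : T}

lemma retract_left (H : HomOrth X Y) (i : X' ⟶ X) (r : X ⟶ X') (hir : i ≫ r = 𝟙 X') :
    HomOrth X' Y := fun f => by
  rw [← Category.id_comp f, ← hir, Category.assoc, H (r ≫ f), comp_zero]

lemma retract_right (H : HomOrth X Y) (i : Y' ⟶ Y) (r : Y ⟶ Y') (hir : i ≫ r = 𝟙 Y') :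
    HomOrth X Y' := fun f => by
  rw [← Category.comp_id f, ← hir, ← Category.assoc, H (f ≫ i), zero_comp]

lemma of_iso (H : HomOrth X Y) (e : X ≅ X') (e' : Y ≅ Y') : HomOrth X' Y' := fun f => by
  rw [← Category.comp_id f, ← e'.inv_hom_id, ← Category.id_comp f, ← e.inv_hom_id]
  simpa using congr(e.inv ≫ $(H (e.hom ≫ f ≫ e'.inv)) ≫ e'.hom)

lemma of_iso_left (H : HomOrth X Y) (e : X ≅ X') : HomOrth X' Y := H.of_iso e (Iso.refl Y)

lemma of_iso_right (H : HomOrth X Y) (e : Y ≅ Y') : HomOrth X Y' := H.of_iso (Iso.refl X) e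

lemma of_isZero_left (hX : IsZero X) : HomOrth X Y := fun _ => hX.eq_of_src _ _

lemma sigma_left {α : Type*} (F : α → T) [HasCoproduct F] (H : ∀ i, HomOrth (F i) Y) :
    HomOrth (∐ F) Y := fun f =>
  Sigma.hom_ext _ _ fun i => by rw [H i (Sigma.ι F i ≫ f), comp_zero]

end HomOrth

variable [HasShift T ℤ] [∀ n : ℤ, (shiftFunctor T n).Additive] {X Y : T}

lemma homOrth_shift_iff (n : ℤ) : HomOrth (X⟦n⟧) (Y⟦n⟧) ↔ HomOrth X Y := by
  constructor
  · intro H f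
    exact (shiftFunctor T n).map_injective (by rw [H (f⟦n⟧'), Functor.map_zero])
  · intro H f
    obtain ⟨f, rfl⟩ := (shiftFunctor T n).map_surjective f
    rw [H f, Functor.map_zero]

lemma homOrth_shift_iff_left {a c d : ℤ} (h : a + d = c) :
    HomOrth (X⟦c⟧) (Y⟦d⟧) ↔ HomOrth (X⟦a⟧) Y := by
  rw [← homOrth_shift_iff (X := X⟦a⟧) d]
  have e := (shiftFunctorAdd' T a d c h).app X
  exact ⟨fun H => H.of_iso_left e, fun H => H.of_iso_left e.symm⟩

lemma homOrth_shift_iff_right {b c d : ℤ} (h : b + c = d) :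
    HomOrth (X⟦c⟧) (Y⟦d⟧) ↔ HomOrth X (Y⟦b⟧) := by
  rw [← homOrth_shift_iff (Y := Y⟦b⟧) c]
  have e := (shiftFunctorAdd' T b c d h).app Y
  exact ⟨fun H => H.of_iso_right e, fun H => H.of_iso_right e.symm⟩

lemma homOrth_shift_left_iff {m n : ℤ} (h : m + n = 0) :
    HomOrth (X⟦n⟧) Y ↔ HomOrth X (Y⟦m⟧) := by
  have e := (shiftFunctorCompIsoId T m n h).app Y
  rw [← homOrth_shift_iff n (X := X)]
  exact ⟨fun H => H.of_iso_right e.symm, fun H => H.of_iso_right e⟩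

variable [HasZeroObject T] [Pretriangulated T]

lemma HomOrth.ext_left {X Y Z W : T} {f : X ⟶ Y} {g : Y ⟶ Z} {h : Z ⟶ X⟦(1 : ℤ)⟧}
    (H : IsDist f g h) (hX : HomOrth X W) (hZ : HomOrth Z W) : HomOrth Y W := fun φ => by
  obtain ⟨ψ, rfl⟩ := H.yoneda_exact₂ φ (hX _)
  rw [hZ ψ, comp_zero]

end HomOrth

section ConeOrth

variable {T : Type u} [Category.{v} T] [HasZeroObject T] [HasShift T ℤ] [Preadditive T]
  [∀ n : ℤ, (shiftFunctor T n).Additive] [Pretriangulated T]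

/-- The cone of `a` is left orthogonal to `w`, expressed on maps out of the source and the target
of `a`; see `coneOrth_iff`. -/
structure ConeOrth {X Y : T} (a : X ⟶ Y) (w : T) : Prop where
  eq_zero : ∀ φ : Y ⟶ w, a ≫ φ = 0 → φ = 0
  extends_shift : ∀ ψ : X⟦(1 : ℤ)⟧ ⟶ w, ∃ ψ' : Y⟦(1 : ℤ)⟧ ⟶ w, ψ = a⟦(1 : ℤ)⟧' ≫ ψ'

lemma coneOrth_iff {X Y D w : T} {a : X ⟶ Y} {g : Y ⟶ D} {h : D ⟶ X⟦(1 : ℤ)⟧}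
    (H : IsDist a g h) : ConeOrth a w ↔ HomOrth D w := by
  constructor
  · intro Ha f
    obtain ⟨ψ, rfl⟩ := H.yoneda_exact₃ f
      (Ha.eq_zero _ (by rw [reassoc_of% H.comp_zero₁₂, zero_comp]))
    obtain ⟨ψ', rfl⟩ := Ha.extends_shift ψ
    rw [reassoc_of% H.comp_zero₃₁, zero_comp]
  · intro hD
    refine ⟨fun φ hφ => ?_, fun ψ => H.yoneda_exact_shift₁ ψ (hD _)⟩
    obtain ⟨ψ, rfl⟩ := H.yoneda_exact₂ φ hφ
    rw [hD ψ, comp_zero]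

lemma coneOrth_id (X w : T) : ConeOrth (𝟙 X) w :=
  (coneOrth_iff (isDist_id_zero X)).2 (.of_isZero_left (isZero_zero T))

-- With the octahedral axiom the cone of `b` would be an extension of the cones of `a` and `c`.
lemma ConeOrth.of_triangle {X Y Z X' Y' Z' w : T} {f : X ⟶ Y} {g : Y ⟶ Z}
    {h : Z ⟶ X⟦(1 : ℤ)⟧} {f' : X' ⟶ Y'} {g' : Y' ⟶ Z'} {h' : Z' ⟶ X'⟦(1 : ℤ)⟧}
    (H : IsDist f g h) (H' : IsDist f' g' h') {a : X ⟶ X'} {b : Y ⟶ Y'} {c : Z ⟶ Z'}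
    (comm₁ : f ≫ b = a ≫ f') (comm₂ : g ≫ c = b ≫ g') (comm₃ : h ≫ a⟦(1 : ℤ)⟧' = c ≫ h')
    (Ha : ConeOrth a w) (Hc : ConeOrth c w) : ConeOrth b w where
  eq_zero φ hφ := by
    obtain ⟨θ, rfl⟩ := H'.yoneda_exact₂ φ
      (Ha.eq_zero _ (by rw [← reassoc_of% comm₁, hφ, comp_zero]))
    obtain ⟨ψ, hψ⟩ := H.yoneda_exact₃ (c ≫ θ) (by rw [reassoc_of% comm₂, hφ])
    obtain ⟨ψ', rfl⟩ := Ha.extends_shift ψ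
    have hθ : θ = h' ≫ ψ' := sub_eq_zero.1 <| Hc.eq_zero _ <| by
      rw [Preadditive.comp_sub, hψ, reassoc_of% comm₃, sub_self]
    rw [hθ, reassoc_of% H'.comp_zero₂₃, zero_comp]
  extends_shift ψ := by
    obtain ⟨α, hα⟩ := Ha.extends_shift (f⟦(1 : ℤ)⟧' ≫ ψ)
    obtain ⟨β, rfl⟩ := H'.yoneda_exact_shift₁ α <| Hc.eq_zero _ <| by
      rw [← reassoc_of% comm₃, ← hα, reassoc_of% H.comp_zero₃₁, zero_comp]
    obtain ⟨γ, hγ⟩ := H.yoneda_exact_shift₂ (ψ - b⟦(1 : ℤ)⟧' ≫ β) <| by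
      rw [Preadditive.comp_sub, hα, ← Functor.map_comp_assoc, ← Functor.map_comp_assoc, comm₁,
        sub_self]
    obtain ⟨γ', rfl⟩ := Hc.extends_shift γ
    refine ⟨β + g'⟦(1 : ℤ)⟧' ≫ γ', ?_⟩
    rw [Preadditive.comp_add, ← Functor.map_comp_assoc, ← comm₂, Functor.map_comp_assoc, ← hγ,
      add_sub_cancel]

end ConeOrth

/-! ### Compact objects -/

section SigmaProj

variable {T : Type u} [Category.{v} T] [Preadditive T] {α : Type*} (F : α → T) [HasCoproduct F]

open Classical in
/-- The projector of `∐ F` onto the summands with index in the finite set `s`. -/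
noncomputable def sigmaProj (s : Finset α) : ∐ F ⟶ ∐ F := ∑ i ∈ s, Sigma.π F i ≫ Sigma.ι F i

variable {F} {s t : Finset α} {i : α}

lemma ι_sigmaProj_of_mem (hi : i ∈ s) : Sigma.ι F i ≫ sigmaProj F s = Sigma.ι F i := by
  classical
  rw [sigmaProj, Preadditive.comp_sum, Finset.sum_eq_single_of_mem i hi, ← Category.assoc,
    Sigma.ι_π_eq_id, Category.id_comp]
  intro j _ hj
  rw [← Category.assoc, Sigma.ι_π_of_ne F hj.symm, zero_comp]

lemma ι_sigmaProj_of_notMem (hi : i ∉ s) : Sigma.ι F i ≫ sigmaProj F s = 0 := by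
  classical
  rw [sigmaProj, Preadditive.comp_sum]
  refine Finset.sum_eq_zero fun j hj => ?_
  rw [← Category.assoc, Sigma.ι_π_of_ne F (by rintro rfl; exact hi hj), zero_comp]

lemma sigmaProj_comp_of_subset (h : s ⊆ t) : sigmaProj F s ≫ sigmaProj F t = sigmaProj F s := by
  refine Sigma.hom_ext _ _ fun i => ?_
  by_cases hi : i ∈ s
  · rw [← Category.assoc, ι_sigmaProj_of_mem hi, ι_sigmaProj_of_mem (h hi)]
  · rw [← Category.assoc, ι_sigmaProj_of_notMem hi, zero_comp]

lemma shift_map_sigmaProj [HasShift T ℤ] (n : ℤ) [(shiftFunctor T n).Additive]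
    [HasCoproduct fun i => (F i)⟦n⟧] :
    (PreservesCoproduct.iso (shiftFunctor T n) F).inv ≫ (sigmaProj F s)⟦n⟧' =
      sigmaProj (fun i => (F i)⟦n⟧) s ≫ (PreservesCoproduct.iso (shiftFunctor T n) F).inv := by
  refine Sigma.hom_ext _ _ fun i => ?_
  rw [PreservesCoproduct.inv_hom, ι_comp_sigmaComparison_assoc, ← Functor.map_comp]
  by_cases hi : i ∈ s
  · rw [ι_sigmaProj_of_mem hi, ← Category.assoc, ι_sigmaProj_of_mem hi, ι_comp_sigmaComparison]
  · rw [ι_sigmaProj_of_notMem hi, ← Category.assoc, ι_sigmaProj_of_notMem hi, zero_comp,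
      Functor.map_zero]

end SigmaProj

section Compact

variable {C}

lemma isCompactObj_iff {X : C} : IsCompactObj C X ↔
    ∀ (α : Type v) (F : α → C) (g : X ⟶ ∐ F), ∃ s : Finset α, g ≫ sigmaProj F s = g := by
  classical
  refine ⟨fun h α F g => ?_, fun h α F g => ?_⟩
  · obtain ⟨s, k, rfl⟩ := h α F g
    refine ⟨s, ?_⟩
    rw [Category.assoc]
    congr 1
    ext ⟨i, hi⟩
    simp [ι_sigmaProj_of_mem hi]
  · obtain ⟨s, hs⟩ := h α F g
    let p : ∐ F ⟶ ∐ fun i : {a // a ∈ s} => F i.1 := Sigma.desc fun i =>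
      if hi : i ∈ s then Sigma.ι (fun i : {a // a ∈ s} => F i.1) ⟨i, hi⟩ else 0
    have hp : sigmaProj F s = p ≫ Sigma.desc fun i => Sigma.ι F i.1 := by
      ext i
      by_cases hi : i ∈ s
      · simp [p, hi, ι_sigmaProj_of_mem hi]
      · simp [p, hi, ι_sigmaProj_of_notMem hi]
    exact ⟨s, g ≫ p, by rw [Category.assoc, ← hp, hs]⟩

namespace IsCompactObj

variable {X Y Z : C}

lemma of_isZero (hX : IsZero X) : IsCompactObj C X :=
  isCompactObj_iff.2 fun _ _ _ => ⟨∅, hX.eq_of_src _ _⟩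

lemma retract (hY : IsCompactObj C Y) (i : X ⟶ Y) (r : Y ⟶ X) (hir : i ≫ r = 𝟙 X) :
    IsCompactObj C X := by
  rw [isCompactObj_iff] at hY ⊢
  intro α F g
  obtain ⟨s, hs⟩ := hY α F (r ≫ g)
  refine ⟨s, ?_⟩
  have hg : g = i ≫ r ≫ g := by rw [reassoc_of% hir]
  rw [hg, Category.assoc, hs]

lemma of_iso (hX : IsCompactObj C X) (e : X ≅ Y) : IsCompactObj C Y :=
  hX.retract e.inv e.hom e.inv_hom_id

lemma ext {f : X ⟶ Y} {g : Y ⟶ Z} {h : Z ⟶ X⟦(1 : ℤ)⟧} (H : IsDist f g h)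
    (hX : IsCompactObj C X) (hZ : IsCompactObj C Z) : IsCompactObj C Y := by
  classical
  rw [isCompactObj_iff] at hX hZ ⊢
  intro α F x
  obtain ⟨s, hs⟩ := hX α F (f ≫ x)
  obtain ⟨k, hk⟩ := H.yoneda_exact₂ (x - x ≫ sigmaProj F s) (by
    rw [Preadditive.comp_sub, ← Category.assoc, hs, sub_self])
  obtain ⟨t, ht⟩ := hZ α F k
  have hx : x = x ≫ sigmaProj F s + g ≫ k ≫ sigmaProj F t := by
    rw [ht, ← hk, add_sub_cancel]
  refine ⟨s ∪ t, ?_⟩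
  conv_lhs => rw [hx]
  simp only [Preadditive.add_comp, Category.assoc,
    sigmaProj_comp_of_subset Finset.subset_union_left,
    sigmaProj_comp_of_subset Finset.subset_union_right]
  exact hx.symm

lemma shift (hX : IsCompactObj C X) (n : ℤ) : IsCompactObj C (X⟦n⟧) := by
  rw [isCompactObj_iff] at hX ⊢
  intro α F g
  let e := (shiftFunctorCompIsoId C n (-n) (add_neg_cancel n)).app X
  let σ := PreservesCoproduct.iso (shiftFunctor C (-n)) F
  obtain ⟨s, hs⟩ := hX α (fun i => (F i)⟦-n⟧) (e.inv ≫ g⟦-n⟧' ≫ σ.hom)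
  refine ⟨s, (shiftFunctor C (-n)).map_injective ?_⟩
  have comm : σ.hom ≫ sigmaProj (fun i => (F i)⟦-n⟧) s = (sigmaProj F s)⟦-n⟧' ≫ σ.hom := by
    rw [← Iso.eq_inv_comp, ← Category.assoc, ← Iso.comp_inv_eq]
    exact (shift_map_sigmaProj (-n)).symm
  rw [Category.assoc, Category.assoc, cancel_epi, comm, ← Category.assoc, cancel_mono] at hs
  rw [Functor.map_comp, hs]

lemma fiber {f : X ⟶ Y} {g : Y ⟶ Z} {h : Z ⟶ X⟦(1 : ℤ)⟧} (H : IsDist f g h)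
    (hY : IsCompactObj C Y) (hZ : IsCompactObj C Z) : IsCompactObj C X := by
  obtain ⟨a, c, H'⟩ := H.invRotate
  exact ext H' (hZ.shift _) hY

end IsCompactObj

end Compact

/-! ### Closures under extensions and coproducts -/

section ExtClosure

variable {T : Type u} [Category.{v} T] [HasZeroObject T] [HasShift T ℤ] [Preadditive T]
  [∀ n : ℤ, (shiftFunctor T n).Additive] [Pretriangulated T] {U U' : Set T} {X Y : T}

namespace extClosure

lemma le (hU : ∀ u ∈ U, extClosure T U' u) (hX : extClosure T U X) : extClosure T U' X := by
  induction hX with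
  | of h => exact hU _ h
  | zero h => exact .zero h
  | ext f g k H _ _ h₁ h₂ => exact .ext f g k H h₁ h₂

lemma shift_mem (n : ℤ) (hU : ∀ u ∈ U, extClosure T U' (u⟦n⟧)) (hX : extClosure T U X) :
    extClosure T U' (X⟦n⟧) := by
  induction hX with
  | of h => exact hU _ h
  | zero h => exact .zero ((shiftFunctor T n).map_isZero h)
  | ext f g k H _ _ h₁ h₂ =>
    obtain ⟨f', g', k', H'⟩ := IsDist.shift H n
    exact .ext f' g' k' H' h₁ h₂

end extClosure

end ExtClosure

section BigClosure

variable {C} {U U' : Set C} {X Y : C}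

lemma extClosure.isCompactObj (hU : ∀ u ∈ U, IsCompactObj C u) (hX : extClosure C U X) :
    IsCompactObj C X := by
  induction hX with
  | of h => exact hU _ h
  | zero h => exact .of_isZero h
  | ext f g k H _ _ h₁ h₂ => exact .ext H h₁ h₂

lemma extClosure.bigClosure (hX : extClosure C U X) : bigClosure C U X := by
  induction hX with
  | of h => exact .of h
  | zero h => exact .zero h
  | ext f g k H _ _ h₁ h₂ => exact .ext f g k H h₁ h₂

namespace bigClosure

lemma of_iso (hX : bigClosure C U X) (e : X ≅ Y) : bigClosure C U Y :=
  .retract e.inv e.hom e.inv_hom_id hX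

lemma le (hU : ∀ u ∈ U, bigClosure C U' u) (hX : bigClosure C U X) : bigClosure C U' X := by
  induction hX with
  | of h => exact hU _ h
  | zero h => exact .zero h
  | coprod f _ e h => exact .coprod f h e
  | ext f g k H _ _ h₁ h₂ => exact .ext f g k H h₁ h₂
  | retract i r e _ h => exact .retract i r e h

lemma shift_mem (n : ℤ) (hU : ∀ u ∈ U, bigClosure C U' (u⟦n⟧)) (hX : bigClosure C U X) :
    bigClosure C U' (X⟦n⟧) := by
  induction hX with
  | of h => exact hU _ h
  | zero h => exact .zero ((shiftFunctor C n).map_isZero h)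
  | coprod f _ e h =>
    exact .coprod (fun i => (f i)⟦n⟧) h
      ((shiftFunctor C n).mapIso e ≪≫ PreservesCoproduct.iso (shiftFunctor C n) f)
  | ext f g k H _ _ h₁ h₂ =>
    obtain ⟨f', g', k', H'⟩ := IsDist.shift H n
    exact .ext f' g' k' H' h₁ h₂
  | retract i r e _ h =>
    exact .retract (i⟦n⟧') (r⟦n⟧') (by rw [← Functor.map_comp, e, CategoryTheory.Functor.map_id]) h

lemma homOrth (hU : ∀ u ∈ U, HomOrth u Y) (hX : bigClosure C U X) : HomOrth X Y := by
  induction hX with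
  | of h => exact hU _ h
  | zero h => exact .of_isZero_left h
  | coprod f _ e h => exact (HomOrth.sigma_left f h).of_iso_left e.symm
  | ext f g k H _ _ h₁ h₂ => exact .ext_left H h₁ h₂
  | retract i r e _ h => exact h.retract_left i r e

end bigClosure

lemma bigClosure_of_mem_smd_coprodPowBig {k : ℕ} (hX : X ∈ smd C (coprodPowBig C U k)) :
    bigClosure C U X := by
  obtain ⟨Y, hY, i, r, hir⟩ := hX
  refine .retract i r hir ?_
  clear i r hir
  induction k generalizing Y with
  | zero => exact .zero hY
  | succ k ih =>
    obtain ⟨A, B, f, g, t, H, ⟨α, F, hF, ⟨e⟩⟩, hB⟩ := hY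
    exact .ext f g t H (.coprod F (fun i => .of (hF i)) e) (ih B hB)

end BigClosure

/-! ### Maps factoring through finite extensions -/

section FactorsThrough

variable {T : Type u} [Category.{v} T] [HasZeroObject T] [HasShift T ℤ] [Preadditive T]
  [∀ n : ℤ, (shiftFunctor T n).Additive] [Pretriangulated T] {V : Set T} {X Y Z : T}

/-- `g` factors through an object of `coprod(V)`. -/
def FactorsThroughExt (V : Set T) (g : X ⟶ Y) : Prop :=
  ∃ (K : T) (a : X ⟶ K) (b : K ⟶ Y), extClosure T V K ∧ g = a ≫ b

namespace FactorsThroughExt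

lemma zero : FactorsThroughExt V (0 : X ⟶ Y) :=
  ⟨_, 0, 0, .zero (isZero_zero T), by simp⟩

lemma add {g g' : X ⟶ Y} (hg : FactorsThroughExt V g) (hg' : FactorsThroughExt V g') :
    FactorsThroughExt V (g + g') := by
  obtain ⟨K, a, b, hK, rfl⟩ := hg
  obtain ⟨K', a', b', hK', rfl⟩ := hg'
  exact ⟨K ⊞ K', biprod.lift a a', biprod.desc b b',
    .ext _ _ _ (isDist_biprod K K') hK hK', by simp⟩

lemma comp {g : X ⟶ Y} (hg : FactorsThroughExt V g) (k : Y ⟶ Z) :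
    FactorsThroughExt V (g ≫ k) := by
  obtain ⟨K, a, b, hK, rfl⟩ := hg
  exact ⟨K, a, b ≫ k, hK, by simp⟩

end FactorsThroughExt

end FactorsThrough

section FactorsThroughCompact

variable {C} {V : Set C} {X Y : C}

namespace FactorsThroughExt

lemma of_sigma {α : Type v} (F : α → C) (hX : IsCompactObj C X)
    (hF : ∀ i, ∀ x : X ⟶ F i, FactorsThroughExt V x) (x : X ⟶ ∐ F) :
    FactorsThroughExt V x := by
  classical
  obtain ⟨s, hs⟩ := isCompactObj_iff.1 hX _ F x
  rw [← hs, sigmaProj, Preadditive.comp_sum]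
  refine Finset.sum_induction _ _ (fun _ _ => add) zero fun i _ => ?_
  rw [← Category.assoc]
  exact (hF i _).comp _

-- Factor `x ≫ g` through a compact `Z'`, then the induced map from the compact fibre `W` of
-- `X ⟶ Z'` through `K₁`, and glue `K₁` and `Z'`; the difference of `x` and the glued map
-- factors through `f`.
lemma of_ext (hV : ∀ u ∈ V, IsCompactObj C u) {Y₁ Y₂ : C} {f : Y₁ ⟶ Y} {g : Y ⟶ Y₂}
    {h : Y₂ ⟶ Y₁⟦(1 : ℤ)⟧} (H : IsDist f g h)
    (h₁ : ∀ X, IsCompactObj C X → ∀ x : X ⟶ Y₁, FactorsThroughExt V x)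
    (h₂ : ∀ X, IsCompactObj C X → ∀ x : X ⟶ Y₂, FactorsThroughExt V x)
    (hX : IsCompactObj C X) (x : X ⟶ Y) : FactorsThroughExt V x := by
  obtain ⟨Z', a, b, hZ', hab⟩ := h₂ X hX (x ≫ g)
  obtain ⟨W, i, δ, HW⟩ := distinguished_cocone_triangle₁ a
  obtain ⟨w, -, hw⟩ := IsDist.exists_mor₁ HW H x b hab.symm
  obtain ⟨K₁, c, d, hK₁, rfl⟩ := h₁ W (.fiber HW hX (hZ'.isCompactObj hV)) w
  obtain ⟨K, p, q, HK⟩ := distinguished_cocone_triangle₂ (δ ≫ c⟦(1 : ℤ)⟧')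
  obtain ⟨β, -, hβ⟩ := IsDist.exists_mor₂ HK H d b (by
    rw [← hw, Functor.map_comp, Category.assoc])
  obtain ⟨γ, -, hγ⟩ := IsDist.exists_mor₂ HW HK c (𝟙 Z') (by simp)
  have hγβ : γ ≫ β ≫ g = x ≫ g := by rw [← hβ, ← Category.assoc, ← hγ, Category.comp_id, hab]
  obtain ⟨z, hz⟩ := H.coyoneda_exact₂ (x - γ ≫ β) (by
    rw [Preadditive.sub_comp, Category.assoc, hγβ, sub_self])
  rw [← add_sub_cancel (γ ≫ β) x, hz]
  exact add ⟨K, γ, β, .ext _ _ _ HK hK₁ hZ', rfl⟩ ((h₁ X hX z).comp f)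

end FactorsThroughExt

lemma bigClosure.factorsThroughExt (hV : ∀ u ∈ V, IsCompactObj C u) (hY : bigClosure C V Y)
    (hX : IsCompactObj C X) (x : X ⟶ Y) : FactorsThroughExt V x := by
  induction hY generalizing X with
  | of h => exact ⟨_, x, 𝟙 _, .of h, by simp⟩
  | zero h => exact ⟨_, x, 𝟙 _, .zero h, by simp⟩
  | coprod F _ e ih =>
    rw [← Category.comp_id x, ← e.hom_inv_id, ← Category.assoc]
    exact (FactorsThroughExt.of_sigma F hX (fun i => ih i hX) _).comp _
  | ext f g k H _ _ h₁ h₂ =>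
    exact .of_ext hV H (fun _ hX x => h₁ hX x) (fun _ hX x => h₂ hX x) hX x
  | retract i r e _ ih =>
    rw [← Category.comp_id x, ← e, ← Category.assoc]
    exact (ih hX _).comp r

end FactorsThroughCompact

/-! ### Ghost maps -/

section Ghost

variable {T : Type u} [Category.{v} T] [Preadditive T] {U U' : Set T} {W X Y Z : T}

/-- `g` is a `U`-ghost: it induces zero on all maps out of objects of `U`. -/
def IsGhost (U : Set T) (g : X ⟶ Y) : Prop := ∀ u ∈ U, ∀ x : u ⟶ X, x ≫ g = 0

/-- `f` lies in the `k`-th power of the ideal of `U`-ghosts. -/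
def IsGhostPow (U : Set T) : ℕ → ∀ {X Y : T}, (X ⟶ Y) → Prop
  | 0, _, _, _ => True
  | k + 1, X, Y, f => ∃ (Z : T) (g : X ⟶ Z) (h : Z ⟶ Y), IsGhost U g ∧ IsGhostPow U k h ∧ f = g ≫ h

/-- The ghost length of `X` with respect to `U` is at most `k`: every map out of `X` in the `k`-th
power of the ideal of `U`-ghosts vanishes. -/
def GhostLengthLE (U : Set T) (k : ℕ) (X : T) : Prop :=
  ∀ (Y : T) (f : X ⟶ Y), IsGhostPow U k f → f = 0

lemma IsGhost.precomp {g : X ⟶ Y} (hg : IsGhost U g) (a : W ⟶ X) : IsGhost U (a ≫ g) :=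
  fun u hu x => by rw [← Category.assoc, hg u hu]

namespace IsGhostPow

variable {k l : ℕ}

lemma precomp {f : X ⟶ Y} (hf : IsGhostPow U k f) (a : W ⟶ X) : IsGhostPow U k (a ≫ f) := by
  cases k with
  | zero => trivial
  | succ k =>
    obtain ⟨Z, g, h, hg, hh, rfl⟩ := hf
    exact ⟨Z, a ≫ g, h, hg.precomp a, hh, by rw [Category.assoc]⟩

lemma exists_eq_comp (a b : ℕ) {f : X ⟶ Y} (hf : IsGhostPow U (a + b) f) :
    ∃ (Z : T) (g : X ⟶ Z) (h : Z ⟶ Y), IsGhostPow U a g ∧ IsGhostPow U b h ∧ f = g ≫ h := by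
  induction a generalizing X with
  | zero => exact ⟨X, 𝟙 X, f, trivial, by rwa [Nat.zero_add] at hf, by simp⟩
  | succ a ih =>
    rw [Nat.succ_add] at hf
    obtain ⟨Z, g, h, hg, hh, rfl⟩ := hf
    obtain ⟨W, p, q, hp, hq, rfl⟩ := ih hh
    exact ⟨W, g ≫ p, q, ⟨Z, g, p, hg, hp, rfl⟩, hq, by simp⟩

lemma mono (hkl : k ≤ l) {f : X ⟶ Y} (hf : IsGhostPow U l f) : IsGhostPow U k f := by
  obtain ⟨n, rfl⟩ := Nat.exists_eq_add_of_le' hkl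
  obtain ⟨Z, g, h, -, hh, rfl⟩ := hf.exists_eq_comp n k
  exact hh.precomp g

lemma anti (hU : U ⊆ U') {f : X ⟶ Y} (hf : IsGhostPow U' k f) : IsGhostPow U k f := by
  induction k generalizing X with
  | zero => trivial
  | succ k ih =>
    obtain ⟨Z, g, h, hg, hh, rfl⟩ := hf
    exact ⟨Z, g, h, fun u hu => hg u (hU hu), ih hh, rfl⟩

end IsGhostPow

namespace GhostLengthLE

variable {k l : ℕ}

lemma retract (hY : GhostLengthLE U k Y) (i : X ⟶ Y) (r : Y ⟶ X) (hir : i ≫ r = 𝟙 X) :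
    GhostLengthLE U k X := fun W f hf => by
  rw [← Category.id_comp f, ← hir, Category.assoc, hY W (r ≫ f) (hf.precomp r), comp_zero]

lemma of_iso (hX : GhostLengthLE U k X) (e : X ≅ Y) : GhostLengthLE U k Y :=
  hX.retract e.inv e.hom e.inv_hom_id

lemma of_isZero (hX : IsZero X) : GhostLengthLE U k X := fun _ _ _ => hX.eq_of_src _ _

lemma of_mem (hX : X ∈ U) : GhostLengthLE U 1 X := by
  rintro Y _ ⟨Z, g, h, hg, -, rfl⟩
  rw [← Category.id_comp g, hg X hX (𝟙 X), zero_comp]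

lemma sigma {α : Type*} (F : α → T) [HasCoproduct F] (hF : ∀ i, GhostLengthLE U k (F i)) :
    GhostLengthLE U k (∐ F) := fun W f hf =>
  Sigma.hom_ext _ _ fun i => by rw [hF i W _ (hf.precomp _), comp_zero]

lemma mono (hU : U ⊆ U') (hkl : k ≤ l) (hX : GhostLengthLE U k X) : GhostLengthLE U' l X :=
  fun W f hf => hX W f ((hf.mono hkl).anti hU)

lemma ext [HasZeroObject T] [HasShift T ℤ] [∀ n : ℤ, (shiftFunctor T n).Additive]
    [Pretriangulated T] {f : X ⟶ Y} {g : Y ⟶ Z} {h : Z ⟶ X⟦(1 : ℤ)⟧} (H : IsDist f g h)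
    (hX : GhostLengthLE U k X) (hZ : GhostLengthLE U l Z) : GhostLengthLE U (k + l) Y := by
  intro W φ hφ
  obtain ⟨V, p, q, hp, hq, rfl⟩ := hφ.exists_eq_comp k l
  obtain ⟨ψ, rfl⟩ := H.yoneda_exact₂ p (hX _ _ (hp.precomp f))
  rw [Category.assoc, hZ _ _ (hq.precomp ψ), comp_zero]

end GhostLengthLE

lemma extClosure.exists_ghostLengthLE [HasZeroObject T] [HasShift T ℤ]
    [∀ n : ℤ, (shiftFunctor T n).Additive] [Pretriangulated T] (hX : extClosure T U X) :
    ∃ k, GhostLengthLE U k X := by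
  induction hX with
  | of h => exact ⟨1, .of_mem h⟩
  | zero h => exact ⟨0, .of_isZero h⟩
  | ext f g k H _ _ h₁ h₂ =>
    obtain ⟨a, ha⟩ := h₁
    obtain ⟨b, hb⟩ := h₂
    exact ⟨_, .ext H ha hb⟩

end Ghost

section GhostTower

variable {C} {U U' : Set C} {X : C}

lemma ghostLengthLE_shift_of_mem_smd_coprodPowBig {k l : ℕ} (n : ℤ)
    (hU : ∀ u ∈ U, GhostLengthLE U' l (u⟦n⟧)) (hX : X ∈ smd C (coprodPowBig C U k)) :
    GhostLengthLE U' (k * l) (X⟦n⟧) := by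
  obtain ⟨Y, hY, i, r, hir⟩ := hX
  refine .retract ?_ (i⟦n⟧') (r⟦n⟧')
    (by rw [← Functor.map_comp, hir, CategoryTheory.Functor.map_id])
  clear i r hir
  induction k generalizing Y with
  | zero => exact .of_isZero ((shiftFunctor C n).map_isZero hY)
  | succ k ih =>
    obtain ⟨A, B, f, g, t, H, ⟨α, F, hF, ⟨e⟩⟩, hB⟩ := hY
    obtain ⟨f', g', t', H'⟩ := IsDist.shift H n
    rw [Nat.succ_mul, Nat.add_comm]
    refine .ext H' ?_ (ih B hB)
    exact (GhostLengthLE.sigma (fun i => (F i)⟦n⟧) fun i => hU _ (hF i)).of_iso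
      (((shiftFunctor C n).mapIso e ≪≫ PreservesCoproduct.iso (shiftFunctor C n) F).symm)

lemma GhostLengthLE.of_mem_smd_coprodPowBig {k : ℕ} (hX : X ∈ smd C (coprodPowBig C U k)) :
    GhostLengthLE U k X := by
  have e (Y : C) : Y⟦(0 : ℤ)⟧ ≅ Y := (shiftFunctorZero C ℤ).app Y
  rw [← Nat.mul_one k]
  exact (ghostLengthLE_shift_of_mem_smd_coprodPowBig 0
    (fun u hu => (GhostLengthLE.of_mem hu).of_iso (e u).symm) hX).of_iso (e X)

variable (U) in
/-- An Adams resolution of `obj 0` with respect to `U`: each `obj n ⟶ obj (n + 1)` is a `U`-ghost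
whose fibre, the `n`-th cell, is a coproduct of objects of `U`. -/
structure GhostTower where
  obj : ℕ → C
  map (n : ℕ) : obj n ⟶ obj (n + 1)
  cell : ℕ → C
  attach (n : ℕ) : cell n ⟶ obj n
  bdry (n : ℕ) : obj (n + 1) ⟶ (cell n)⟦(1 : ℤ)⟧
  isDist (n : ℕ) : IsDist (attach n) (map n) (bdry n)
  cell_mem (n : ℕ) : cell n ∈ bigAddClosure C U
  isGhost (n : ℕ) : IsGhost U (map n)

namespace GhostTower

/-- The tower starting at `obj 1`. -/
abbrev tail (𝓣 : GhostTower U) : GhostTower U where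
  obj n := 𝓣.obj (n + 1)
  map n := 𝓣.map (n + 1)
  cell n := 𝓣.cell (n + 1)
  attach n := 𝓣.attach (n + 1)
  bdry n := 𝓣.bdry (n + 1)
  isDist n := 𝓣.isDist (n + 1)
  cell_mem n := 𝓣.cell_mem (n + 1)
  isGhost n := 𝓣.isGhost (n + 1)

/-- The composite `obj 0 ⟶ obj n` of the maps of the tower. -/
def comp (𝓣 : GhostTower U) : ∀ n, 𝓣.obj 0 ⟶ 𝓣.obj n
  | 0 => 𝟙 _
  | n + 1 => 𝓣.comp n ≫ 𝓣.map n

lemma comp_succ_eq_map_comp_tail (𝓣 : GhostTower U) (n : ℕ) :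
    𝓣.comp (n + 1) = 𝓣.map 0 ≫ 𝓣.tail.comp n := by
  induction n with
  | zero => simp [comp, tail]
  | succ n ih =>
    rw [comp, ih, Category.assoc]
    rfl

lemma isGhostPow_comp (𝓣 : GhostTower U) (n : ℕ) : IsGhostPow U n (𝓣.comp n) := by
  induction n generalizing 𝓣 with
  | zero => trivial
  | succ n ih => exact ⟨_, _, _, 𝓣.isGhost 0, ih 𝓣.tail, 𝓣.comp_succ_eq_map_comp_tail n⟩

-- The object `E` is the fibre of `comp n`, up to the octahedral axiom.
lemma exists_factor_of_comp_eq_zero (𝓣 : GhostTower U) (n : ℕ) :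
    ∃ E ∈ coprodPowBig C U n, ∃ b : E ⟶ 𝓣.obj 0,
      ∀ (K : C) (x : K ⟶ 𝓣.obj 0), x ≫ 𝓣.comp n = 0 → ∃ y : K ⟶ E, x = y ≫ b := by
  induction n generalizing 𝓣 with
  | zero =>
    refine ⟨_, isZero_zero C, 0, fun K x hx => ⟨0, ?_⟩⟩
    rw [← Category.comp_id x, zero_comp]
    exact hx
  | succ n ih =>
    obtain ⟨E₁, hE₁, b₁, hb₁⟩ := ih 𝓣.tail
    obtain ⟨E, p, q, HE⟩ := distinguished_cocone_triangle₂ (b₁ ≫ 𝓣.bdry 0)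
    obtain ⟨b, hpb, hqb⟩ := IsDist.exists_mor₂ HE (𝓣.isDist 0) (𝟙 _) b₁ (by simp)
    rw [Category.id_comp] at hpb
    refine ⟨E, ⟨𝓣.cell 0, E₁, p, q, _, HE, 𝓣.cell_mem 0, hE₁⟩, b, fun K x hx => ?_⟩
    obtain ⟨y₁, hy₁⟩ := hb₁ K (x ≫ 𝓣.map 0) (by
      rw [Category.assoc, ← hx, comp_succ_eq_map_comp_tail])
    obtain ⟨y, rfl⟩ := IsDist.coyoneda_exact₃ HE y₁ (by
      rw [← Category.assoc, ← hy₁, Category.assoc, (𝓣.isDist 0).comp_zero₂₃, comp_zero])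
    obtain ⟨z, hz⟩ := (𝓣.isDist 0).coyoneda_exact₂ (x - y ≫ b) (by
      rw [Preadditive.sub_comp, hy₁, Category.assoc, Category.assoc, hqb, sub_self])
    refine ⟨y + z ≫ p, ?_⟩
    rw [Preadditive.add_comp, Category.assoc, hpb, ← hz, add_sub_cancel]

lemma mem_smd_of_comp_eq_zero (𝓣 : GhostTower U) {n : ℕ} (h : 𝓣.comp n = 0) :
    𝓣.obj 0 ∈ smd C (coprodPowBig C U n) := by
  obtain ⟨E, hE, b, hb⟩ := 𝓣.exists_factor_of_comp_eq_zero n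
  obtain ⟨y, hy⟩ := hb _ (𝟙 _) (by rw [h, comp_zero])
  exact ⟨E, hE, y, b, hy.symm⟩

end GhostTower

end GhostTower

/-! ### Shifts of a single object -/

section Shifts

variable {T : Type u} [Category.{v} T] [HasShift T ℤ] {G X : T} {P P' : Set ℤ}

/-- The objects isomorphic to `Σʲ G` for some `j ∈ P`. -/
def shifts (G : T) (P : Set ℤ) : Set T := {X | ∃ j ∈ P, Nonempty (X ≅ G⟦j⟧)}

lemma shift_mem_shifts {j : ℤ} (hj : j ∈ P) : G⟦j⟧ ∈ shifts G P := ⟨j, hj, ⟨Iso.refl _⟩⟩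

lemma shifts_mono (h : P ⊆ P') : shifts G P ⊆ shifts G P' := fun _ ⟨j, hj, e⟩ => ⟨j, h hj, e⟩

lemma shift_mem_shifts_of_mem (n : ℤ) (h : ∀ j ∈ P, j + n ∈ P') (hX : X ∈ shifts G P) :
    X⟦n⟧ ∈ shifts G P' := by
  obtain ⟨j, hj, ⟨e⟩⟩ := hX
  exact ⟨j + n, h j hj, ⟨(shiftFunctor T n).mapIso e ≪≫ ((shiftFunctorAdd T j n).app G).symm⟩⟩

lemma unionIcc_genSeqPos (G : T) (a b : ℤ) :
    unionIcc T (genSeqPos T G) a b = shifts G (Set.Icc a b) := by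
  ext X
  simp [unionIcc, genSeqPos, singletonShift, shifts, and_assoc]

lemma unionIic_genSeqPos (G : T) (b : ℤ) :
    unionIic T (genSeqPos T G) b = shifts G (Set.Iic b) := by
  ext X
  simp [unionIic, genSeqPos, singletonShift, shifts]

lemma unionAll_genSeqPos (G : T) : unionAll T (genSeqPos T G) = shifts G Set.univ := by
  ext X
  simp [unionAll, genSeqPos, singletonShift, shifts]

lemma homOrth_of_mem_shifts [Preadditive T] {Y : T} (h : ∀ m ∈ P, HomOrth (G⟦m⟧) Y)
    (hX : X ∈ shifts G P) : HomOrth X Y := by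
  obtain ⟨j, hj, ⟨e⟩⟩ := hX
  exact (h j hj).of_iso_left e.symm

end Shifts

section ShiftsTower

variable {C}

lemma isCompactObj_of_mem_shifts {G X : C} {P : Set ℤ} (hG : IsCompactObj C G)
    (hX : X ∈ shifts G P) : IsCompactObj C X := by
  obtain ⟨j, -, ⟨e⟩⟩ := hX
  exact (hG.shift j).of_iso e.symm

lemma exists_ghost_triangle (G : C) (P : Set ℤ) (X : C) :
    ∃ (A X' : C) (i : A ⟶ X) (e : X ⟶ X') (δ : X' ⟶ A⟦(1 : ℤ)⟧),
      IsDist i e δ ∧ A ∈ bigAddClosure C (shifts G P) ∧ IsGhost (shifts G P) e := by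
  let F : (Σ j : P, (G⟦(j : ℤ)⟧ ⟶ X)) → C := fun p => G⟦(p.1 : ℤ)⟧
  let i : ∐ F ⟶ X := Sigma.desc fun p => p.2
  obtain ⟨X', e, δ, H⟩ := distinguished_cocone_triangle i
  refine ⟨∐ F, X', i, e, δ, H, ⟨_, F, fun p => shift_mem_shifts p.1.2, ⟨Iso.refl _⟩⟩, ?_⟩
  rintro u ⟨j, hj, ⟨t⟩⟩ x
  have hx : x = t.hom ≫ Sigma.ι F ⟨⟨j, hj⟩, t.inv ≫ x⟩ ≫ i := by simp [i]
  rw [hx, Category.assoc, Category.assoc, IsDist.comp_zero₁₂ H, comp_zero, comp_zero]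

lemma exists_ghostTower (G : C) (P : Set ℤ) (X : C) :
    ∃ 𝓣 : GhostTower (shifts G P), 𝓣.obj 0 = X := by
  choose A X' i e δ H hA he using exists_ghost_triangle G P
  let Y : ℕ → C := fun n => Nat.rec X (fun _ => X') n
  exact ⟨⟨Y, fun n => e (Y n), fun n => A (Y n), fun n => i (Y n), fun n => δ (Y n),
    fun n => H (Y n), fun n => hA (Y n), fun n => he (Y n)⟩, rfl⟩

lemma mem_smd_coprodPowBig_iff_ghostLengthLE {G X : C} {P : Set ℤ} {k : ℕ} :
    X ∈ smd C (coprodPowBig C (shifts G P) k) ↔ GhostLengthLE (shifts G P) k X := by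
  refine ⟨.of_mem_smd_coprodPowBig, fun h => ?_⟩
  obtain ⟨𝓣, rfl⟩ := exists_ghostTower G P X
  exact 𝓣.mem_smd_of_comp_eq_zero (h _ _ (𝓣.isGhostPow_comp k))

end ShiftsTower

/-! ### Homotopy colimits of sequences -/

section Hocolim

section Sequence

variable {T : Type u} [Category.{v} T] [HasCoproducts.{v} T] {Y : ℕ → T} {W : T}

lemma seqCoprod_hom_ext {f g : seqCoprod T Y ⟶ W}
    (h : ∀ n, seqInj T Y n ≫ f = seqInj T Y n ≫ g) : f = g :=
  Sigma.hom_ext _ _ fun n => h n.down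

/-- The map out of the coproduct of a sequence with components `c n`. -/
noncomputable def seqDesc (c : ∀ n, Y n ⟶ W) : seqCoprod T Y ⟶ W := Sigma.desc fun n => c n.down

lemma seqInj_seqDesc (c : ∀ n, Y n ⟶ W) (n : ℕ) : seqInj T Y n ≫ seqDesc c = c n :=
  Sigma.ι_desc _ _

variable [Preadditive T] {e : ∀ n, Y n ⟶ Y (n + 1)}

lemma seqInj_oneMinusShift (n : ℕ) :
    seqInj T Y n ≫ oneMinusShift T Y e = seqInj T Y n - e n ≫ seqInj T Y (n + 1) :=
  Sigma.ι_desc _ _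

variable (Y) in
open Classical in
/-- The projection of the coproduct of a sequence onto its `n`-th term. -/
noncomputable def seqPi (n : ℕ) : seqCoprod T Y ⟶ Y n :=
  Sigma.π (fun n : ULift.{v} ℕ => Y n.down) ⟨n⟩

lemma seqInj_seqPi_self (n : ℕ) : seqInj T Y n ≫ seqPi Y n = 𝟙 (Y n) := Sigma.ι_π_eq_id _ _

lemma seqInj_seqPi_of_ne {m n : ℕ} (h : m ≠ n) : seqInj T Y m ≫ seqPi Y n = 0 :=
  Sigma.ι_π_of_ne (fun n : ULift.{v} ℕ => Y n.down) (by simpa using h)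

lemma oneMinusShift_seqPi_zero : oneMinusShift T Y e ≫ seqPi Y 0 = seqPi Y 0 := by
  refine seqCoprod_hom_ext fun k => ?_
  rw [← Category.assoc, seqInj_oneMinusShift, Preadditive.sub_comp, Category.assoc,
    seqInj_seqPi_of_ne k.succ_ne_zero, comp_zero, sub_zero]

lemma oneMinusShift_seqPi_succ (n : ℕ) :
    oneMinusShift T Y e ≫ seqPi Y (n + 1) = seqPi Y (n + 1) - seqPi Y n ≫ e n := by
  refine seqCoprod_hom_ext fun k => ?_
  rw [← Category.assoc, seqInj_oneMinusShift, Preadditive.sub_comp, Preadditive.comp_sub,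
    Category.assoc, sub_right_inj]
  obtain rfl | hk := eq_or_ne k n
  · rw [seqInj_seqPi_self, reassoc_of% seqInj_seqPi_self (Y := Y) k, Category.comp_id]
  · rw [seqInj_seqPi_of_ne (by simpa using hk), reassoc_of% seqInj_seqPi_of_ne (Y := Y) hk,
      comp_zero, zero_comp]

lemma exists_oneMinusShift_comp_eq (he : ∀ n, ∀ φ : Y n ⟶ W, ∃ φ', φ = e n ≫ φ')
    (b : seqCoprod T Y ⟶ W) (c₀ : Y 0 ⟶ W) :
    ∃ c, oneMinusShift T Y e ≫ c = b ∧ seqInj T Y 0 ≫ c = c₀ := by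
  choose F hF using he
  let c : ∀ n, Y n ⟶ W := fun n => Nat.rec (motive := fun n => Y n ⟶ W) c₀
    (fun n x => F n (x - seqInj T Y n ≫ b)) n
  have hc (n : ℕ) : c n - seqInj T Y n ≫ b = e n ≫ c (n + 1) := hF n _
  refine ⟨seqDesc c, seqCoprod_hom_ext fun n => ?_, seqInj_seqDesc c 0⟩
  rw [← Category.assoc, seqInj_oneMinusShift, Preadditive.sub_comp, Category.assoc,
    seqInj_seqDesc, seqInj_seqDesc, ← hc, sub_sub_cancel]

end Sequence

variable {C} {Y : ℕ → C} {e : ∀ n, Y n ⟶ Y (n + 1)} {K : C}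

namespace IsCompactObj

lemma exists_eq_sum_seqPi (hK : IsCompactObj C K) (g : K ⟶ seqCoprod C Y) :
    ∃ s : Finset ℕ, g = ∑ n ∈ s, g ≫ seqPi Y n ≫ seqInj C Y n := by
  obtain ⟨s, hs⟩ := isCompactObj_iff.1 hK _ _ g
  refine ⟨s.map Equiv.ulift.toEmbedding, ?_⟩
  rw [Finset.sum_map, ← Preadditive.comp_sum]
  refine hs.symm.trans (congrArg (g ≫ ·) (Finset.sum_congr rfl fun n _ => ?_))
  obtain ⟨n⟩ := n
  change _ = seqPi Y n ≫ seqInj C Y n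
  rw [seqPi, seqInj]
  congr 2
  exact Subsingleton.elim _ _

lemma eq_zero_of_seqPi (hK : IsCompactObj C K) {g : K ⟶ seqCoprod C Y}
    (hg : ∀ n, g ≫ seqPi Y n = 0) : g = 0 := by
  obtain ⟨s, hs⟩ := hK.exists_eq_sum_seqPi g
  rw [hs]
  exact Finset.sum_eq_zero fun n _ => by rw [← Category.assoc, hg, zero_comp]

lemma exists_comp_seqPi_eq_zero (hK : IsCompactObj C K) (g : K ⟶ seqCoprod C Y) :
    ∃ n, g ≫ seqPi Y n = 0 := by
  obtain ⟨s, hs⟩ := hK.exists_eq_sum_seqPi g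
  obtain ⟨n, hn⟩ := Infinite.exists_notMem_finset s
  refine ⟨n, ?_⟩
  rw [hs, Preadditive.sum_comp]
  refine Finset.sum_eq_zero fun k hk => ?_
  rw [Category.assoc, Category.assoc, seqInj_seqPi_of_ne (by rintro rfl; exact hn hk), comp_zero,
    comp_zero]

lemma eq_zero_of_comp_oneMinusShift (hK : IsCompactObj C K) {g : K ⟶ seqCoprod C Y}
    (hg : g ≫ oneMinusShift C Y e = 0) : g = 0 := by
  refine hK.eq_zero_of_seqPi fun n => ?_
  induction n with
  | zero => rw [← oneMinusShift_seqPi_zero (e := e), ← Category.assoc, hg, zero_comp]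
  | succ n ih =>
    have h : g ≫ oneMinusShift C Y e ≫ seqPi Y (n + 1) = _ :=
      congrArg (g ≫ ·) (oneMinusShift_seqPi_succ n)
    rw [← Category.assoc, hg, zero_comp, Preadditive.comp_sub, ← Category.assoc g (seqPi Y n), ih,
      zero_comp, sub_zero] at h
    exact h.symm

-- `x ≫ ιₖ ≡ x ≫ eₖ ≫ ιₖ₊₁` modulo the image of `1 - shift`, so every summand can be pushed up the
-- sequence until it vanishes.
lemma exists_eq_comp_oneMinusShift (hK : IsCompactObj C K) {m : ℕ}
    (h : ∀ n ≥ m, ∀ x : K ⟶ Y n, x ≫ e n = 0) (g : K ⟶ seqCoprod C Y) :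
    ∃ g', g = g' ≫ oneMinusShift C Y e := by
  have push (k : ℕ) (x : K ⟶ Y k) : x ≫ seqInj C Y k =
      (x ≫ seqInj C Y k) ≫ oneMinusShift C Y e + (x ≫ e k) ≫ seqInj C Y (k + 1) := by
    rw [Category.assoc, seqInj_oneMinusShift, Preadditive.comp_sub, Category.assoc, sub_add_cancel]
  have key (d k : ℕ) (hd : m ≤ k + d) (x : K ⟶ Y k) :
      ∃ g', x ≫ seqInj C Y k = g' ≫ oneMinusShift C Y e := by
    induction d generalizing k with
    | zero => exact ⟨x ≫ seqInj C Y k, (push k x).trans (by rw [h k hd x, zero_comp, add_zero])⟩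
    | succ d ih =>
      obtain ⟨g', hg'⟩ := ih (k + 1) (by lia) (x ≫ e k)
      exact ⟨x ≫ seqInj C Y k + g', (push k x).trans (by rw [Preadditive.add_comp, ← hg'])⟩
  obtain ⟨s, hs⟩ := hK.exists_eq_sum_seqPi g
  choose g' hg' using fun n => key m n (by lia) (g ≫ seqPi Y n)
  refine ⟨∑ n ∈ s, g' n, ?_⟩
  rw [hs, Preadditive.sum_comp]
  exact Finset.sum_congr rfl fun n _ => by rw [← hg', Category.assoc]

end IsCompactObj

namespace IsHocolim

variable {H : C} {π : seqCoprod C Y ⟶ H} {δ : H ⟶ (seqCoprod C Y)⟦(1 : ℤ)⟧}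

lemma isDist (D : IsHocolim C Y e H π δ) : IsDist (oneMinusShift C Y e) π δ := D

lemma seqInj_π (D : IsHocolim C Y e H π δ) (n : ℕ) :
    seqInj C Y n ≫ π = e n ≫ seqInj C Y (n + 1) ≫ π := by
  rw [← sub_eq_zero, ← Category.assoc (e n), ← Preadditive.sub_comp, ← seqInj_oneMinusShift,
    Category.assoc, D.isDist.comp_zero₁₂, comp_zero]

lemma homOrth (D : IsHocolim C Y e H π δ) (hK : IsCompactObj C K) {m : ℕ}
    (h : ∀ n ≥ m, ∀ x : K ⟶ Y n, x ≫ e n = 0) : HomOrth K H := by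
  intro x
  let ε := (shiftFunctorCompIsoId C (-1 : ℤ) 1 (by norm_num)).app K
  obtain ⟨y, hy⟩ := (shiftFunctor C (1 : ℤ)).map_surjective (ε.hom ≫ x ≫ δ)
  have hy0 : y = 0 := (hK.shift (-1)).eq_zero_of_comp_oneMinusShift (e := e) <|
    (shiftFunctor C (1 : ℤ)).map_injective <| by
      rw [Functor.map_comp, hy, Category.assoc, Category.assoc, D.isDist.comp_zero₃₁, comp_zero,
        comp_zero, Functor.map_zero]
  obtain ⟨z, rfl⟩ := D.isDist.coyoneda_exact₃ x (by
    rw [← cancel_epi ε.hom, ← hy, hy0, Functor.map_zero, comp_zero])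
  obtain ⟨z', rfl⟩ := hK.exists_eq_comp_oneMinusShift h z
  rw [Category.assoc, D.isDist.comp_zero₁₂, comp_zero]

lemma coneOrth {w : C} (D : IsHocolim C Y e H π δ) (he : ∀ n, ConeOrth (e n) (w⟦(1 : ℤ)⟧)) :
    ConeOrth (seqInj C Y 0 ≫ π) (w⟦(1 : ℤ)⟧) := by
  have hext (n : ℕ) (φ : Y n ⟶ w) : ∃ φ', φ = e n ≫ φ' := by
    obtain ⟨ψ, hψ⟩ := (he n).extends_shift (φ⟦(1 : ℤ)⟧')
    obtain ⟨φ', rfl⟩ := (shiftFunctor C (1 : ℤ)).map_surjective ψ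
    exact ⟨φ', (shiftFunctor C (1 : ℤ)).map_injective (by rw [hψ, Functor.map_comp])⟩
  refine ⟨fun φ hφ => ?_, fun ψ => ?_⟩
  · have hπ (n : ℕ) : seqInj C Y n ≫ π ≫ φ = 0 := by
      induction n with
      | zero => rwa [← Category.assoc]
      | succ n ih =>
        refine (he n).eq_zero _ ?_
        rw [← ih, ← Category.assoc, ← Category.assoc, Category.assoc (e n), ← D.seqInj_π,
          Category.assoc]
    obtain ⟨χ, rfl⟩ := D.isDist.yoneda_exact₃ φ (seqCoprod_hom_ext fun n => by
      rw [hπ, comp_zero])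
    obtain ⟨b, rfl⟩ := (shiftFunctor C (1 : ℤ)).map_surjective χ
    obtain ⟨c, rfl, -⟩ := exists_oneMinusShift_comp_eq hext b 0
    rw [Functor.map_comp, reassoc_of% D.isDist.comp_zero₃₁, zero_comp]
  · obtain ⟨c₀, rfl⟩ := (shiftFunctor C (1 : ℤ)).map_surjective ψ
    obtain ⟨c, hc, rfl⟩ := exists_oneMinusShift_comp_eq hext 0 c₀
    obtain ⟨θ, rfl⟩ := D.isDist.yoneda_exact₂ c hc
    exact ⟨θ⟦(1 : ℤ)⟧', by rw [← Functor.map_comp, Category.assoc]⟩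

end IsHocolim

end Hocolim

/-! ### Compact generators -/

section Truncation

variable {C} {U : Set C}

lemma exists_isHocolim (Y : ℕ → C) (e : ∀ n, Y n ⟶ Y (n + 1)) :
    ∃ H π δ, IsHocolim C Y e H π δ :=
  distinguished_cocone_triangle _

namespace GhostTower

lemma homOrth_hocolim (𝓣 : GhostTower U) {K H : C} {π : seqCoprod C 𝓣.obj ⟶ H}
    {δ : H ⟶ (seqCoprod C 𝓣.obj)⟦(1 : ℤ)⟧} (D : IsHocolim C 𝓣.obj 𝓣.map H π δ)
    (hK : IsCompactObj C K) (hKU : K ∈ U) : HomOrth K H :=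
  D.homOrth hK (m := 0) fun n _ x => 𝓣.isGhost n _ hKU x

lemma comp_seqPi (𝓣 : GhostTower U) {y : 𝓣.obj 0 ⟶ seqCoprod C 𝓣.obj}
    (hy : seqInj C 𝓣.obj 0 = y ≫ oneMinusShift C 𝓣.obj 𝓣.map) (n : ℕ) :
    y ≫ seqPi 𝓣.obj n = 𝓣.comp n := by
  induction n with
  | zero =>
    rw [← oneMinusShift_seqPi_zero (e := 𝓣.map), ← Category.assoc, ← hy, seqInj_seqPi_self, comp]
  | succ n ih =>
    have h : seqInj C 𝓣.obj 0 ≫ seqPi 𝓣.obj (n + 1) = _ := seqInj_seqPi_of_ne n.succ_ne_zero.symm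
    rw [hy, Category.assoc, oneMinusShift_seqPi_succ, Preadditive.comp_sub, sub_eq_zero,
      ← Category.assoc y (seqPi 𝓣.obj n), ih] at h
    exact h

end GhostTower

-- `v` is the homotopy colimit of a ghost tower starting at `t`.
lemma exists_truncation {G : C} (hG : IsCompactObj C G) (P : Set ℤ) (t : C) :
    ∃ (u v : C) (f : u ⟶ t) (g : t ⟶ v) (h : v ⟶ u⟦(1 : ℤ)⟧), IsDist f g h ∧
      (∀ m ∈ P, HomOrth (G⟦m⟧) v) ∧ ∀ w, (∀ m ∈ P, HomOrth (G⟦m⟧) w) → HomOrth u w := by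
  obtain ⟨𝓣, rfl⟩ := exists_ghostTower G P t
  obtain ⟨v, π, δ, D⟩ := exists_isHocolim 𝓣.obj 𝓣.map
  obtain ⟨u, f, h, H⟩ := distinguished_cocone_triangle₁ (seqInj C 𝓣.obj 0 ≫ π)
  refine ⟨u, v, f, _, h, H, fun m hm => 𝓣.homOrth_hocolim D (hG.shift m) (shift_mem_shifts hm),
    fun w hw => ?_⟩
  have hcell (n : ℕ) : HomOrth (𝓣.cell n) w := by
    obtain ⟨α, F, hF, ⟨e⟩⟩ := 𝓣.cell_mem n
    exact (HomOrth.sigma_left F fun i => homOrth_of_mem_shifts hw (hF i)).of_iso_left e.symm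
  rw [← homOrth_shift_iff 1, ← coneOrth_iff (IsDist.rotate H)]
  exact D.coneOrth fun n => (coneOrth_iff (𝓣.isDist n).rotate).2 ((homOrth_shift_iff 1).2 (hcell n))

end Truncation

section Generation

lemma subset_smd {T : Type u} [Category.{v} T] (U : Set T) : U ⊆ smd T U :=
  fun X hX => ⟨X, hX, 𝟙 X, 𝟙 X, Category.comp_id _⟩

variable {C} {G X : C}

-- The ghost tower of `X` has zero homotopy colimit, so its composites out of the compact object `X`
-- eventually vanish.
lemma exists_mem_smd_coprodPowBig (hG : IsCompactGenerator C G) (hX : IsCompactObj C X) :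
    ∃ n, X ∈ smd C (coprodPowBig C (shifts G Set.univ) n) := by
  obtain ⟨𝓣, rfl⟩ := exists_ghostTower G Set.univ X
  obtain ⟨H, π, δ, D⟩ := exists_isHocolim 𝓣.obj 𝓣.map
  have hH : IsZero H := hG.2 H fun n =>
    𝓣.homOrth_hocolim D (hG.1.shift n) (shift_mem_shifts (Set.mem_univ n))
  obtain ⟨y, hy⟩ := D.isDist.coyoneda_exact₂ (seqInj C 𝓣.obj 0) (hH.eq_of_tgt _ _)
  obtain ⟨n, hn⟩ := hX.exists_comp_seqPi_eq_zero y
  exact ⟨n, 𝓣.mem_smd_of_comp_eq_zero ((𝓣.comp_seqPi hy n).symm.trans hn)⟩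

lemma compacts_eq_smd_extClosure (hG : IsCompactGenerator C G) :
    compacts C = smd C {K | extClosure C (shifts G Set.univ) K} := by
  have hcomp : ∀ u ∈ shifts G Set.univ, IsCompactObj C u := fun u =>
    isCompactObj_of_mem_shifts hG.1
  refine Set.Subset.antisymm (fun X hX => ?_) ?_
  · obtain ⟨n, hn⟩ := exists_mem_smd_coprodPowBig hG hX
    obtain ⟨K, a, b, hK, hab⟩ :=
      (bigClosure_of_mem_smd_coprodPowBig hn).factorsThroughExt hcomp hX (𝟙 X)
    exact ⟨K, hK, a, b, hab.symm⟩
  · rintro X ⟨Y, hY, i, r, hir⟩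
    exact (hY.isCompactObj hcomp).retract i r hir

lemma isGenSeq_genSeqPos (hG : IsCompactGenerator C G) : IsGenSeq C (genSeqPos C G) where
  compact i X := fun ⟨e⟩ => (hG.1.shift i).of_iso e.symm
  generates := by rw [unionAll_genSeqPos, compacts_eq_smd_extClosure hG]
  shift_cond n X hX := by
    rw [gInt, unionIcc_genSeqPos]
    refine subset_smd _ (.of ?_)
    rcases hX with (⟨a, ⟨e⟩, ⟨e'⟩⟩ | ⟨⟨e⟩⟩) | ⟨a, ⟨e⟩, ⟨e'⟩⟩
    · exact ⟨n - 1, ⟨by lia, by lia⟩, ⟨e' ≪≫ (shiftFunctor C (-1 : ℤ)).mapIso e ≪≫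
        ((shiftFunctorAdd' C n (-1) (n - 1) (by lia)).app G).symm⟩⟩
    · exact ⟨n, by simp, ⟨e⟩⟩
    · exact ⟨n + 1, ⟨by lia, by lia⟩, ⟨e' ≪≫ (shiftFunctor C (1 : ℤ)).mapIso e ≪≫
        ((shiftFunctorAdd C n 1).app G).symm⟩⟩

end Generation

/-! ### Co-t-structures and metrics -/

section Metric

variable {T : Type u} [Category.{v} T] [HasShift T ℤ] {A U : Set T} {X : T}

/-- The metric `n ↦ Σ⁻ⁿ T^{≥0}` attached to the co-aisle `U = T^{≥0}` of a co-t-structure. -/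
def coTMetric (U : Set T) (n : ℤ) : Set T := shiftSet T (-n) U

lemma mem_shiftSet_iff (hA : ∀ ⦃X Y : T⦄, (X ≅ Y) → X ∈ A → Y ∈ A) {m n : ℤ} (h : m + n = 0) :
    X ∈ shiftSet T n A ↔ X⟦m⟧ ∈ A := by
  constructor
  · rintro ⟨a, ha, ⟨e⟩⟩
    exact hA ((shiftFunctor T m).mapIso e ≪≫
      (shiftFunctorCompIsoId T n m (by lia)).app a).symm ha
  · exact fun hX => ⟨X⟦m⟧, hX, ⟨((shiftFunctorCompIsoId T m n h).app X).symm⟩⟩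

end Metric

section CoTStructure

variable {T : Type u} [Category.{v} T] [HasZeroObject T] [HasShift T ℤ] [Preadditive T]
  [∀ n : ℤ, (shiftFunctor T n).Additive] [Pretriangulated T] {U V : Set T} {X Y : T}

namespace IsCoTStructure

lemma mem_ge_iff (hc : IsCoTStructure T U V) : X ∈ U ↔ ∀ v ∈ V, HomOrth X (v⟦(1 : ℤ)⟧) := by
  refine ⟨fun hX v hv => hc.orthogonal X hX _ ⟨v, hv, ⟨Iso.refl _⟩⟩, fun hX => ?_⟩
  obtain ⟨u, v, f, g, h, H, hu, v', hv', ⟨e⟩⟩ := hc.exists_triangle X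
  have hg : g = 0 := (hX v' hv').of_iso_right e.symm g
  obtain ⟨s, hs⟩ := IsDist.coyoneda_exact₂ H (𝟙 X) (by rw [hg, comp_zero])
  exact hc.smd_closed_ge ⟨u, hu, s, f, hs.symm⟩

lemma shift_mem_ge (hc : IsCoTStructure T U V) (hX : X ∈ U) {n : ℤ} (hn : n ≤ 0) : X⟦n⟧ ∈ U := by
  induction n, hn using Int.leInductionDown with
  | base => exact hc.iso_closed_ge ((shiftFunctorZero T ℤ).app X).symm hX
  | pred n _ ih =>
    exact hc.iso_closed_ge ((shiftFunctorAdd' T n (-1) (n - 1) (by lia)).app X).symm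
      ((mem_shiftSet_iff hc.iso_closed_ge (by lia)).1 (hc.shift_ge ih))

lemma mem_coTMetric_iff (hc : IsCoTStructure T U V) {n : ℤ} : X ∈ coTMetric U n ↔ X⟦n⟧ ∈ U :=
  mem_shiftSet_iff hc.iso_closed_ge (by lia)

lemma coTMetric_zero (hc : IsCoTStructure T U V) : coTMetric U 0 = U := by
  ext X
  exact hc.mem_coTMetric_iff.trans
    ⟨hc.iso_closed_ge ((shiftFunctorZero T ℤ).app X),
      hc.iso_closed_ge ((shiftFunctorZero T ℤ).app X).symm⟩

lemma mem_coTMetric_of_iso (hc : IsCoTStructure T U V) {n : ℤ} (hX : X ∈ coTMetric U n)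
    (e : X ≅ Y) : Y ∈ coTMetric U n :=
  hc.mem_coTMetric_iff.2
    (hc.iso_closed_ge ((shiftFunctor T n).mapIso e) (hc.mem_coTMetric_iff.1 hX))

lemma shift_mem_coTMetric (hc : IsCoTStructure T U V) {n m j : ℤ} (hX : X ∈ coTMetric U n)
    (h : m ≤ n - j) : X⟦j⟧ ∈ coTMetric U m :=
  hc.mem_coTMetric_iff.2 <| hc.iso_closed_ge
    (((shiftFunctorAdd' T n (j + m - n) (j + m) (by lia)).app X).symm ≪≫
      (shiftFunctorAdd T j m).app X)
    (hc.shift_mem_ge (hc.mem_coTMetric_iff.1 hX) (by lia))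

lemma mem_coTMetric_iff_homOrth (hc : IsCoTStructure T U V) {n : ℤ} :
    X ∈ coTMetric U n ↔ ∀ v ∈ V, HomOrth X (v⟦1 - n⟧) := by
  rw [hc.mem_coTMetric_iff, hc.mem_ge_iff]
  exact forall₂_congr fun v _ => homOrth_shift_iff_right (by lia)

lemma isOrthMetric_coTMetric (hc : IsCoTStructure T U V) : IsOrthMetric T (coTMetric U) where
  zero_mem n X hX := hc.mem_coTMetric_iff_homOrth.2 fun _ _ => .of_isZero_left hX
  iso_closed n X Y e hX := hc.mem_coTMetric_of_iso hX e
  star_subset n Y := fun ⟨X, Z, f, g, h, H, hX, hZ⟩ => by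
    rw [hc.mem_coTMetric_iff_homOrth] at hX hZ ⊢
    exact fun v hv => .ext_left H (hX v hv) (hZ v hv)
  shift_one n X := fun ⟨a, ha, ⟨e⟩⟩ =>
    hc.mem_coTMetric_of_iso (hc.shift_mem_coTMetric ha (by lia)) e.symm
  antitone n X hX :=
    hc.mem_coTMetric_of_iso (hc.shift_mem_coTMetric hX (by lia)) ((shiftFunctorZero T ℤ).app X)
  shift_neg_one n X := fun ⟨a, ha, ⟨e⟩⟩ =>
    hc.mem_coTMetric_of_iso (hc.shift_mem_coTMetric ha (by lia)) e.symm
  orth n := by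
    refine Set.Subset.antisymm (fun X hX => ?_) fun X hX w hw => hw X hX
    exact hc.mem_coTMetric_iff_homOrth.2 fun v hv => hX _ fun a ha =>
      hc.mem_coTMetric_iff_homOrth.1 ha v hv

end IsCoTStructure

end CoTStructure

section GeneratedCoaisle

variable {T : Type u} [Category.{v} T] [HasShift T ℤ] [Preadditive T] {G w : T}

/-- The objects that are right orthogonal to `ΣᵐG` for all `m ≤ n`. -/
def shiftOrth (G : T) (n : ℤ) : Set T := {w | ∀ m ≤ n, HomOrth (G⟦m⟧) w}

/-- The co-aisle generated by the non-positive shifts of `G`. It is the degree-zero term of the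
metric `R^G` of the generating sequence `n ↦ {ΣⁿG}`. -/
def generatedCoaisle (G : T) : Set T := lOrth T (shiftOrth G 0)

lemma shiftOrth_of_iso {n : ℤ} {w' : T} (e : w ≅ w') (hw : w ∈ shiftOrth G n) :
    w' ∈ shiftOrth G n := fun m hm => (hw m hm).of_iso_right e

lemma mem_generatedCoaisle_of_iso {X Y : T} (e : X ≅ Y) (hX : X ∈ generatedCoaisle G) :
    Y ∈ generatedCoaisle G := fun w hw => HomOrth.of_iso_left (hX w hw) e

variable [∀ n : ℤ, (shiftFunctor T n).Additive]

lemma shift_mem_shiftOrth_iff {n j k : ℤ} (h : n = k + j) :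
    w⟦j⟧ ∈ shiftOrth G n ↔ w ∈ shiftOrth G k := by
  refine ⟨fun hw m hm => ?_, fun hw m hm => ?_⟩
  · exact (homOrth_shift_iff_left rfl).1 (hw (m + j) (by lia))
  · exact (homOrth_shift_iff_left (by lia)).2 (hw (m - j) (by lia))

lemma mem_coTMetric_generatedCoaisle_iff {X : T} {n : ℤ} :
    X ∈ coTMetric (generatedCoaisle G) n ↔ X ∈ lOrth T (shiftOrth G (-n)) := by
  refine (mem_shiftSet_iff (fun _ _ => mem_generatedCoaisle_of_iso) (m := n) (by lia)).trans
    ⟨fun hX w hw => ?_, fun hX w hw => ?_⟩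
  · exact (homOrth_shift_iff n).1 (hX _ ((shift_mem_shiftOrth_iff (by lia)).2 hw))
  · exact (homOrth_shift_left_iff (by lia)).2
      (hX _ ((shift_mem_shiftOrth_iff (j := -n) (by lia)).2 hw))

end GeneratedCoaisle

section GeneratedCoTStructure

variable {C} {G : C}

lemma isCoTStructure_generatedCoaisle (hG : IsCompactObj C G) :
    IsCoTStructure C (generatedCoaisle G) (shiftOrth G (-1)) where
  smd_closed_ge X := fun ⟨Y, hY, i, r, hir⟩ w hw => HomOrth.retract_left (hY w hw) i r hir
  smd_closed_le X := fun ⟨Y, hY, i, r, hir⟩ m hm => (hY m hm).retract_right i r hir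
  iso_closed_ge _ _ := mem_generatedCoaisle_of_iso
  iso_closed_le _ _ := shiftOrth_of_iso
  shift_le X hX := by
    rw [mem_shiftSet_iff (fun _ _ => shiftOrth_of_iso) (m := -1) (by lia)] at hX
    exact fun m hm => (shift_mem_shiftOrth_iff (k := 0) (by lia)).1 hX m (by lia)
  shift_ge X hX := by
    rw [mem_shiftSet_iff (fun _ _ => mem_generatedCoaisle_of_iso) (m := -1) (by lia)]
    intro w hw
    refine (homOrth_shift_left_iff (m := 1) (by lia)).2 (hX _ ?_)
    exact (shift_mem_shiftOrth_iff (k := -1) (by lia)).2 fun m hm => hw m (by lia)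
  orthogonal X hX v hv := by
    rw [mem_shiftSet_iff (fun _ _ => shiftOrth_of_iso) (m := -1) (by lia),
      shift_mem_shiftOrth_iff (k := 0) (by lia)] at hv
    exact hX v hv
  exists_triangle t := by
    obtain ⟨u, v, f, g, h, H, hv, hu⟩ := exists_truncation hG (Set.Iic 0) t
    refine ⟨u, v, f, g, h, H, hu, ?_⟩
    rw [mem_shiftSet_iff (fun _ _ => shiftOrth_of_iso) (m := -1) (by lia),
      shift_mem_shiftOrth_iff (k := 0) (by lia)]
    exact hv

end GeneratedCoTStructure

section Closure

variable {T : Type u} [Category.{v} T] [HasZeroObject T] [HasShift T ℤ] [Preadditive T]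
  [∀ n : ℤ, (shiftFunctor T n).Additive] [Pretriangulated T]

/-- `S` is closed under extensions and shifts. -/
structure IsTriangulatedClass (S : Set T) : Prop where
  ext : ∀ {X Y Z : T} {f : X ⟶ Y} {g : Y ⟶ Z} {h : Z ⟶ X⟦(1 : ℤ)⟧},
    IsDist f g h → X ∈ S → Z ∈ S → Y ∈ S
  shift : ∀ {X : T}, X ∈ S → ∀ n : ℤ, X⟦n⟧ ∈ S

namespace IsTriangulatedClass

variable {S : Set T} {X Y Z : T} {f : X ⟶ Y} {g : Y ⟶ Z} {h : Z ⟶ X⟦(1 : ℤ)⟧}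

lemma cone (hS : IsTriangulatedClass S) (H : IsDist f g h) (hX : X ∈ S) (hY : Y ∈ S) : Z ∈ S :=
  hS.ext H.rotate hY (hS.shift hX 1)

lemma fiber (hS : IsTriangulatedClass S) (H : IsDist f g h) (hY : Y ∈ S) (hZ : Z ∈ S) :
    X ∈ S := by
  obtain ⟨a, c, H'⟩ := H.invRotate
  exact hS.ext H' (hS.shift hZ (-1)) hY

end IsTriangulatedClass

namespace IsExtGoodMetric

variable {R : ℤ → Set T} {X : T}

lemma anti (hR : IsExtGoodMetric T R) : Antitone R := antitone_int_of_succ_le hR.antitone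

lemma shift_mem (hR : IsExtGoodMetric T R) {k m n : ℤ} (hX : X ∈ R k) (h : m + n.natAbs ≤ k) :
    X⟦n⟧ ∈ R m := by
  induction n generalizing m with
  | zero =>
    exact hR.iso_closed m ((shiftFunctorZero T ℤ).app X).symm
      (hR.anti (by simpa using h) hX)
  | succ n ih =>
    have hXn : X⟦(n : ℤ)⟧ ∈ R (m + 1) := ih (by lia)
    exact hR.iso_closed m ((shiftFunctorAdd T (n : ℤ) 1).app X).symm
      (hR.shift_one m ⟨_, hXn, ⟨Iso.refl _⟩⟩)
  | pred n ih =>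
    have hXn : X⟦(-n : ℤ)⟧ ∈ R (m + 1) := ih (by lia)
    exact hR.iso_closed m ((shiftFunctorAdd' T (-n : ℤ) (-1) (-n - 1) (by lia)).app X).symm
      (hR.shift_neg_one m ⟨_, hXn, ⟨Iso.refl _⟩⟩)

end IsExtGoodMetric

end Closure

section ClosCompacts

variable {C} {R : ℤ → Set C} {X : C}

/-- Every compact object is left orthogonal to `R m` for all large `m`. -/
def EventuallyOrth (R : ℤ → Set C) : Prop :=
  ∀ K : C, IsCompactObj C K → ∃ m₀ : ℤ, ∀ m ≥ m₀, ∀ X ∈ R m, HomOrth K X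

lemma isTriangulatedClass_closCompacts (hR : IsOrthMetric C R) (hv : EventuallyOrth R) :
    IsTriangulatedClass (closCompacts C R) where
  shift hX n := by
    rw [closCompacts, Set.mem_iInter] at hX ⊢
    intro m
    obtain ⟨K, D, k, d, c, H, hK, hD⟩ := hX (m + n.natAbs)
    obtain ⟨k', d', c', H'⟩ := IsDist.shift H n
    exact ⟨_, _, k', d', c', H', hK.shift n, hR.shift_mem hD le_rfl⟩
  ext := by
    intro X Y Z f g h H hX hZ
    rw [closCompacts, Set.mem_iInter] at hX hZ ⊢
    intro n
    obtain ⟨K'', D'', k'', d'', c'', H'', hK'', hD''⟩ := hZ n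
    obtain ⟨m, hm⟩ := hv K'' hK''
    obtain ⟨K', D', k', d', c', (H' : IsDist k' d' c'), hK', hD'⟩ := hX (max n (m + 1))
    have horth : HomOrth K'' (D'⟦(1 : ℤ)⟧) :=
      hm m le_rfl _ (hR.shift_mem hD' (le_max_right _ _))
    obtain ⟨κ, hκ⟩ := H'.rotate.rotate.coyoneda_exact₃ (k'' ≫ h) (horth _)
    obtain ⟨K, p, q, HK⟩ := distinguished_cocone_triangle₂ (-κ)
    have comm₃ : (-κ) ≫ k'⟦(1 : ℤ)⟧' = k'' ≫ h := by rw [hκ]; simp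
    obtain ⟨k, comm₁, comm₂⟩ := IsDist.exists_mor₂ HK H k' k'' comm₃
    obtain ⟨D, d, c, HD⟩ := distinguished_cocone_triangle k
    refine ⟨K, D, k, d, c, HD, .ext HK hK' hK'', ?_⟩
    rw [← hR.orth n]
    intro w hw
    exact (coneOrth_iff HD).1 <| .of_triangle HK H comm₁ comm₂ comm₃
      ((coneOrth_iff H').2 (hw _ (hR.anti (le_max_left _ _) hD')))
      ((coneOrth_iff H'').2 (hw _ hD''))

end ClosCompacts

/-! ### Approximation by a compact generator -/

section BoundedShifts

variable {T : Type u} [Category.{v} T] [HasZeroObject T] [HasShift T ℤ] [Preadditive T]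
  [∀ n : ℤ, (shiftFunctor T n).Additive] [Pretriangulated T]

lemma MG_genSeqPos (G : T) (n : ℤ) :
    MG T (genSeqPos T G) n = smd T {X | extClosure T (shifts G (Set.Iic (-n))) X} := by
  rw [MG, gIic, unionIic_genSeqPos]

lemma MG_genSeqPos_subset_shiftSet {G : T} (i : ℤ) :
    MG T (genSeqPos T G) i ⊆ shiftSet T 1 (MG T (genSeqPos T G) (i + 1)) := by
  intro X hX
  rw [MG_genSeqPos] at hX ⊢
  obtain ⟨Y, hY, a, r, har⟩ := hX
  refine ⟨X⟦(-1 : ℤ)⟧, ⟨Y⟦(-1 : ℤ)⟧, ?_, a⟦(-1 : ℤ)⟧', r⟦(-1 : ℤ)⟧', ?_⟩,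
    ⟨((shiftFunctorCompIsoId T (-1) 1 (by lia)).app X).symm⟩⟩
  · refine hY.shift_mem (-1) fun u hu => .of (shift_mem_shifts_of_mem (-1) (fun j hj => ?_) hu)
    simp only [Set.mem_Iic] at hj ⊢
    lia
  · rw [← Functor.map_comp, har, CategoryTheory.Functor.map_id]

lemma extClosure.exists_shifts_Icc {G X : T}
    (hX : extClosure T (shifts G Set.univ) X) :
    ∃ B : ℕ, extClosure T (shifts G (Set.Icc (-B : ℤ) B)) X := by
  induction hX with
  | of h =>
    obtain ⟨j, -, e⟩ := h
    exact ⟨j.natAbs, .of ⟨j, ⟨by lia, by lia⟩, e⟩⟩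
  | zero h => exact ⟨0, .zero h⟩
  | ext f g k H _ _ h₁ h₂ =>
    obtain ⟨a, ha⟩ := h₁
    obtain ⟨b, hb⟩ := h₂
    refine ⟨a + b, .ext f g k H (ha.le fun u hu => .of (shifts_mono ?_ hu))
      (hb.le fun u hu => .of (shifts_mono ?_ hu))⟩ <;>
    exact Set.Icc_subset_Icc (by push_cast; lia) (by push_cast; lia)

end BoundedShifts

section ApproxClass

variable {C} {G H X : C} {P P₀ P' : Set ℤ} {k l : ℕ}

/-- The objects built from the `ΣʲG` with `j ∈ P` by coproducts, extensions and direct summands.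
The third argument is a dummy that gives this the same shape as `powClass`. -/
def bigClass (G : C) (P : Set ℤ) (_ : ℕ) : Set C := {X | bigClosure C (shifts G P) X}

/-- The direct summands of `k`-fold extensions of coproducts of the `ΣʲG` with `j ∈ P`. -/
def powClass (G : C) (P : Set ℤ) (k : ℕ) : Set C := smd C (coprodPowBig C (shifts G P) k)

/-- The properties of `bigClass` and `powClass` on which the comparison of the two notions of
approximability rests. It lets the weak and the strong notions be treated together. -/
structure IsApproxClass (Q : C → Set ℤ → ℕ → Set C) : Prop where
  powClass_subset : ∀ (G : C) (P : Set ℤ) (k : ℕ), powClass G P k ⊆ Q G P k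
  subset_bigClass : ∀ (G : C) (P : Set ℤ) (k : ℕ), Q G P k ⊆ bigClass G P k
  mono : ∀ {G : C} {P P' : Set ℤ} {k l : ℕ}, P ⊆ P' → k ≤ l → Q G P k ⊆ Q G P' l
  ext : ∀ {G X Y Z : C} {P : Set ℤ} {k l : ℕ} {f : X ⟶ Y} {g : Y ⟶ Z} {h : Z ⟶ X⟦(1 : ℤ)⟧},
    IsDist f g h → X ∈ Q G P k → Z ∈ Q G P l → Y ∈ Q G P (k + l)
  shift_mem : ∀ {G H X : C} {P₀ P P' : Set ℤ} {k l : ℕ} (n : ℤ), H ∈ Q G P₀ l → X ∈ Q H P k →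
    (∀ p ∈ P₀, ∀ j ∈ P, p + (j + n) ∈ P') → X⟦n⟧ ∈ Q G P' (k * l)

lemma shift_mem_bigClass (n : ℤ) (hH : H ∈ bigClass G P₀ l) (hX : X ∈ bigClass H P k)
    (hP : ∀ p ∈ P₀, ∀ j ∈ P, p + (j + n) ∈ P') (m : ℕ) : X⟦n⟧ ∈ bigClass G P' m := by
  refine bigClosure.shift_mem n ?_ hX
  rintro u ⟨j, hj, ⟨e⟩⟩
  have hHj : bigClosure C (shifts G P') (H⟦j + n⟧) :=
    hH.shift_mem (j + n) fun v hv => .of (shift_mem_shifts_of_mem _ (fun p hp => hP p hp j hj) hv)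
  exact hHj.of_iso ((shiftFunctor C n).mapIso e ≪≫ ((shiftFunctorAdd C j n).app H).symm).symm

lemma shift_mem_powClass (n : ℤ) (hH : H ∈ powClass G P₀ l) (hX : X ∈ powClass H P k)
    (hP : ∀ p ∈ P₀, ∀ j ∈ P, p + (j + n) ∈ P') : X⟦n⟧ ∈ powClass G P' (k * l) := by
  refine mem_smd_coprodPowBig_iff_ghostLengthLE.2
    (ghostLengthLE_shift_of_mem_smd_coprodPowBig n ?_ hX)
  rintro u ⟨j, hj, ⟨e⟩⟩
  have hHj : GhostLengthLE (shifts G P') (l * 1) (H⟦j + n⟧) :=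
    ghostLengthLE_shift_of_mem_smd_coprodPowBig (j + n)
      (fun v hv => .of_mem (shift_mem_shifts_of_mem _ (fun p hp => hP p hp j hj) hv)) hH
  rw [mul_one] at hHj
  exact hHj.of_iso ((shiftFunctor C n).mapIso e ≪≫ ((shiftFunctorAdd C j n).app H).symm).symm

lemma powClass_subset_bigClass (G : C) (P : Set ℤ) (k : ℕ) : powClass G P k ⊆ bigClass G P k :=
  fun _ => bigClosure_of_mem_smd_coprodPowBig

lemma isApproxClass_bigClass : IsApproxClass (bigClass (C := C)) where
  powClass_subset := powClass_subset_bigClass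
  subset_bigClass _ _ _ := subset_rfl
  mono hP _ _ hX := bigClosure.le (fun _ hu => .of (shifts_mono hP hu)) hX
  ext H hX hZ := .ext _ _ _ H hX hZ
  shift_mem n hH hX hP := shift_mem_bigClass n hH hX hP _

lemma isApproxClass_powClass : IsApproxClass (powClass (C := C)) where
  powClass_subset _ _ _ := subset_rfl
  subset_bigClass := powClass_subset_bigClass
  mono hP hkl _ hX := by
    rw [powClass, mem_smd_coprodPowBig_iff_ghostLengthLE] at hX ⊢
    exact hX.mono (shifts_mono hP) hkl
  ext H hX hZ := by
    rw [powClass, mem_smd_coprodPowBig_iff_ghostLengthLE] at hX hZ ⊢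
    exact .ext H hX hZ
  shift_mem := shift_mem_powClass

lemma IsApproxClass.of_isZero {Q : C → Set ℤ → ℕ → Set C} (hQ : IsApproxClass Q) (hX : IsZero X) :
    X ∈ Q G P 0 :=
  hQ.powClass_subset _ _ _ (subset_smd _ hX)

lemma exists_mem_powClass (hG : IsCompactGenerator C G) (hX : IsCompactObj C X) :
    ∃ B k : ℕ, X ∈ powClass G (Set.Icc (-B : ℤ) B) k := by
  have hX' : X ∈ smd C {K | extClosure C (shifts G Set.univ) K} :=
    compacts_eq_smd_extClosure hG ▸ hX
  obtain ⟨Y, hY, i, r, hir⟩ := hX'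
  obtain ⟨B, hB⟩ := extClosure.exists_shifts_Icc hY
  obtain ⟨k, hk⟩ := hB.exists_ghostLengthLE
  exact ⟨B, k, mem_smd_coprodPowBig_iff_ghostLengthLE.2 (hk.retract i r hir)⟩

end ApproxClass

section ApproxDomain

variable {C} {G X : C} {R : ℤ → Set C} {A : ℤ}

lemma IsGPreApprox.eventuallyOrth (hG : IsCompactGenerator C G)
    (hR : IsGPreApprox C (genSeqPos C G) R A) : EventuallyOrth R := by
  intro K hK
  have hK' : K ∈ smd C {K | extClosure C (shifts G Set.univ) K} :=
    compacts_eq_smd_extClosure hG ▸ hK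
  obtain ⟨Y, hY, i, r, hir⟩ := hK'
  suffices h : ∃ m₀ : ℤ, ∀ m ≥ m₀, ∀ X ∈ R m, HomOrth Y X from
    h.imp fun m₀ h m hm X hX => (h m hm X hX).retract_left i r hir
  clear i r hir
  induction hY with
  | of h =>
    obtain ⟨n, -, e⟩ := h
    exact (hR.cond2 n).imp fun N hN m hm X hX => hN m hm _ e X hX
  | zero h => exact ⟨0, fun _ _ _ _ => .of_isZero_left h⟩
  | ext f g k H _ _ h₁ h₂ =>
    obtain ⟨a, ha⟩ := h₁
    obtain ⟨b, hb⟩ := h₂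
    exact ⟨max a b, fun m hm X hX => .ext_left H (ha m (by lia) X hX) (hb m (by lia) X hX)⟩

lemma compacts_subset_closCompacts (hR : IsExtGoodMetric C R) : compacts C ⊆ closCompacts C R :=
  fun X hX => Set.mem_iInter.2 fun n =>
    ⟨X, _, _, _, _, isDist_id_zero X, hX, hR.zero_mem n _ (isZero_zero C)⟩

/-- The properties shared by the constant assignment `R ↦ T` and by `R ↦ T̄^c`, the two classes of
objects to which the approximation conditions are restricted. -/
structure IsApproxDomain (dom : (ℤ → Set C) → Set C) : Prop where
  isTriangulatedClass : ∀ {R : ℤ → Set C}, IsOrthMetric C R → EventuallyOrth R →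
    IsTriangulatedClass (dom R)
  eq_of_interleaved : ∀ {R R' : ℤ → Set C} {A : ℤ}, IsOrthMetric C R → EventuallyOrth R →
    (∀ i, R' (i + A) ⊆ R i) → (∀ i, R (i + A) ∩ dom R ⊆ R' i) → dom R = dom R'

lemma isApproxDomain_univ : IsApproxDomain fun _ : ℤ → Set C => Set.univ where
  isTriangulatedClass _ _ := ⟨fun _ _ _ => trivial, fun _ _ => trivial⟩
  eq_of_interleaved _ _ _ _ := rfl

lemma isApproxDomain_closCompacts : IsApproxDomain (closCompacts C) where
  isTriangulatedClass := isTriangulatedClass_closCompacts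
  eq_of_interleaved {R R' A} hR hv h' h := by
    refine Set.Subset.antisymm (fun X hX => ?_) fun X hX => ?_
    · refine Set.mem_iInter.2 fun n => ?_
      obtain ⟨K, D, k, d, c, H, hK, hD⟩ := Set.mem_iInter.1 hX (n + A)
      exact ⟨K, D, k, d, c, H, hK, h n ⟨hD, (isTriangulatedClass_closCompacts hR hv).cone H
        (compacts_subset_closCompacts hR.toIsExtGoodMetric hK) hX⟩⟩
    · refine Set.mem_iInter.2 fun n => ?_
      obtain ⟨K, D, k, d, c, H, hK, hD⟩ := Set.mem_iInter.1 hX (n + A)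
      exact ⟨K, D, k, d, c, H, hK, h' n hD⟩

end ApproxDomain

section Approximable

variable {C}

/-- The part of the definitions of (weak) co-(quasi)approximability that does not depend on the
approximating triangles. -/
structure IsCoPreApprox (H : C) (A : ℤ) (U V : Set C) : Prop where
  generator : IsCompactGenerator C H
  pos : 0 < A
  coT : IsCoTStructure C U V
  mem : H⟦-A⟧ ∈ U
  orth : homZero C (singletonShift C H A) U

/-- The common form of the four co-approximability conditions: `Q` is the class of approximating
objects, and `dom` selects the objects to be approximated. -/
def CoApproximableBy (Q : C → Set ℤ → ℕ → Set C) (dom : (ℤ → Set C) → Set C) : Prop :=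
  ∃ (H : C) (A : ℤ) (U V : Set C), IsCoPreApprox H A U V ∧
    ∀ F ∈ U ∩ dom (coTMetric U), approxTriangle C F (Q H (Set.Icc (-A) A) A.toNat)
      (coTMetric U 1 ∩ dom (coTMetric U))

/-- The common form of the four `G`-approximability conditions on `(T, R, A)`, for the generating
sequence `n ↦ {ΣⁿG}`. -/
structure IsGApproxBy (Q : C → Set ℤ → ℕ → Set C) (dom : (ℤ → Set C) → Set C) (G : C)
    (R : ℤ → Set C) (A : ℤ) : Prop extends IsGPreApprox C (genSeqPos C G) R A where
  hom_vanish : ∀ n i : ℤ, A ≤ n + i → homZero C (genSeqPos C G n) (R i)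
  approx : ∀ i : ℤ, ∀ F ∈ R i ∩ dom R,
    approxTriangle C F (Q G (Set.Icc (-A - i) (A - i)) A.toNat) (R (i + 1) ∩ dom R)

end Approximable

/-! ### From co-t-structures to metrics -/

section Forward

variable {C} {G H X Y : C} {A : ℤ} {U V : Set C} {P : Set ℤ}

namespace IsCoPreApprox

lemma shift_mem_coTMetric (h : IsCoPreApprox H A U V) {j i : ℤ} (hj : j + i ≤ -A) :
    H⟦j⟧ ∈ coTMetric U i :=
  h.coT.mem_coTMetric_iff.2 <| h.coT.iso_closed_ge
    (((shiftFunctorAdd' C (-A) (j + i + A) (j + i) (by lia)).app H).symm ≪≫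
      (shiftFunctorAdd C j i).app H)
    (h.coT.shift_mem_ge h.mem (by lia))

lemma homOrth_shift (h : IsCoPreApprox H A U V) {j i : ℤ} (hj : A ≤ j + i)
    (hX : X ∈ coTMetric U i) : HomOrth (H⟦j⟧) X := by
  have hXU : X⟦A - j⟧ ∈ U := by
    rw [← h.coT.coTMetric_zero]
    exact h.coT.shift_mem_coTMetric hX (by lia)
  exact (homOrth_shift_iff_left (by lia)).1 (h.orth _ ⟨Iso.refl _⟩ _ hXU)

lemma mem_coTMetric_of_bigClosure (h : IsCoPreApprox H A U V) {i : ℤ}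
    (hP : ∀ p ∈ P, p + i ≤ -A) (hX : bigClosure C (shifts H P) X) : X ∈ coTMetric U i :=
  h.coT.mem_coTMetric_iff_homOrth.2 fun v hv => hX.homOrth fun _ hu =>
    homOrth_of_mem_shifts
      (fun p hp => h.coT.mem_coTMetric_iff_homOrth.1 (h.shift_mem_coTMetric (hP p hp)) v hv) hu

lemma homOrth_of_bigClosure (h : IsCoPreApprox H A U V) {i : ℤ} (hP : ∀ p ∈ P, A ≤ p + i)
    (hX : bigClosure C (shifts H P) X) (hY : Y ∈ coTMetric U i) : HomOrth X Y :=
  hX.homOrth fun _ hu => homOrth_of_mem_shifts (fun p hp => h.homOrth_shift (hP p hp) hY) hu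

variable {B : ℕ}

lemma homZero_genSeqPos (h : IsCoPreApprox H A U V)
    (hB : bigClosure C (shifts H (Set.Icc (-B : ℤ) B)) G) {n i : ℤ} (hni : A + B ≤ n + i) :
    homZero C (genSeqPos C G n) (coTMetric U i) := by
  rintro X ⟨e⟩ Y hY
  have hX : bigClosure C (shifts H (Set.Icc (n - B) (n + B))) (G⟦n⟧) :=
    hB.shift_mem n fun u hu => .of <| shift_mem_shifts_of_mem n
      (fun j hj => ⟨by have := hj.1; lia, by have := hj.2; lia⟩) hu
  exact h.homOrth_of_bigClosure (fun p hp => by have := hp.1; lia) (hX.of_iso e.symm) hY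

lemma MG_subset_coTMetric (h : IsCoPreApprox H A U V)
    (hB : bigClosure C (shifts H (Set.Icc (-B : ℤ) B)) G) {n i : ℤ} (hni : A + B + i ≤ n) :
    MG C (genSeqPos C G) n ⊆ coTMetric U i := by
  intro X hX
  rw [MG_genSeqPos] at hX
  obtain ⟨Y, hY, a, r, har⟩ := hX
  have hYH : bigClosure C (shifts H (Set.Iic (-A - i))) Y := by
    refine hY.bigClosure.le ?_
    rintro u ⟨j, hj, ⟨e⟩⟩
    refine .of_iso (hB.shift_mem j fun v hv => .of <| shift_mem_shifts_of_mem j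
      (fun m hm => ?_) hv) e.symm
    simp only [Set.mem_Iic, Set.mem_Icc] at hj hm ⊢
    lia
  exact h.mem_coTMetric_of_bigClosure (fun p hp => by simp only [Set.mem_Iic] at hp; lia)
    (.retract a r har hYH)

lemma isGPreApprox (hG : IsCompactObj C G) (h : IsCoPreApprox H A U V)
    (hB : bigClosure C (shifts H (Set.Icc (-B : ℤ) B)) G) {A' : ℤ} (hA' : A + B ≤ A') :
    IsGPreApprox C (genSeqPos C G) (coTMetric U) A' where
  orthMetric := h.coT.isOrthMetric_coTMetric
  A_pos := by have := h.pos; lia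
  cond0 i X hX := by
    refine Set.mem_iUnion₂.2 ⟨1, ?_, MG_genSeqPos_subset_shiftSet i hX⟩
    have := h.pos
    simp only [Set.mem_ofPred_eq, abs_one]
    lia
  cond1 i X hX := by
    refine ⟨h.MG_subset_coTMetric hB (by lia) hX, ?_⟩
    rw [MG_genSeqPos] at hX
    obtain ⟨Y, hY, a, r, har⟩ := hX
    exact (hY.isCompactObj fun u => isCompactObj_of_mem_shifts hG).retract a r har
  cond2 n := ⟨A' - n, fun i hi => h.homZero_genSeqPos hB (by lia)⟩

end IsCoPreApprox

variable {Q : C → Set ℤ → ℕ → Set C} {dom : (ℤ → Set C) → Set C}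

lemma CoApproximableBy.exists_isGApproxBy (hQ : IsApproxClass Q) (hdom : IsApproxDomain dom)
    (hG : IsCompactGenerator C G) (hC : CoApproximableBy Q dom) :
    ∃ R A, IsGApproxBy Q dom G R A := by
  obtain ⟨H, A, U, V, h, happ⟩ := hC
  obtain ⟨B, l, hHG⟩ := exists_mem_powClass hG h.generator.1
  obtain ⟨B', l', hGH⟩ := exists_mem_powClass h.generator hG.1
  have hB' := bigClosure_of_mem_smd_coprodPowBig hGH
  obtain ⟨a, rfl⟩ := Int.eq_ofNat_of_zero_le h.pos.le
  have hpre : IsGPreApprox C (genSeqPos C G) (coTMetric U) (a + B + B' + a * l : ℕ) :=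
    h.isGPreApprox hG.1 hB' (by push_cast; nlinarith)
  have htri : IsTriangulatedClass (dom (coTMetric U)) :=
    hdom.isTriangulatedClass hpre.orthMetric (hpre.eventuallyOrth hG)
  refine ⟨coTMetric U, (a + B + B' + a * l : ℕ), hpre,
    fun n i hni => h.homZero_genSeqPos hB' (by push_cast at hni; nlinarith), ?_⟩
  rintro i F ⟨hFi, hF⟩
  obtain ⟨E, D, f, g, k, T, hE, hD₁, hD⟩ :=
    happ (F⟦i⟧) ⟨h.coT.mem_coTMetric_iff.1 hFi, htri.shift hF i⟩
  obtain ⟨f', g', k', T'⟩ := IsDist.shift T (-i)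
  have hE' : E⟦-i⟧ ∈ Q G (Set.Icc (-(a + B) - i : ℤ) (a + B - i)) (a * l) :=
    hQ.shift_mem (-i) (hQ.powClass_subset _ _ _ hHG) hE
      fun p hp j hj => ⟨by have := hp.1; have := hj.1; lia, by have := hp.2; have := hj.2; lia⟩
  refine ⟨_, _, _, _, _, T'.of_iso₂ ((shiftFunctorCompIsoId C i (-i) (by lia)).app F), ?_,
    h.coT.shift_mem_coTMetric hD₁ (by lia), htri.shift hD (-i)⟩
  refine hQ.mono (Set.Icc_subset_Icc ?_ ?_) ?_ hE'
  · push_cast; nlinarith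
  · push_cast; nlinarith
  · rw [Int.toNat_natCast]; lia

end Forward

/-! ### From metrics to co-t-structures -/

section Composition

variable {T : Type u} [Category.{v} T] [HasZeroObject T] [HasShift T ℤ] [Preadditive T]
  [∀ n : ℤ, (shiftFunctor T n).Additive] [Pretriangulated T]

-- Without the octahedral axiom the cone of `b` need not be an extension of `D₂`, but it is still
-- left orthogonal to whatever `D₂` is left orthogonal to.
lemma IsOrthMetric.exists_isDist_comp {R : ℤ → Set T} (hR : IsOrthMetric T R)
    {F E₁ D₁ E₂ D₂ : T} {f₁ : E₁ ⟶ F} {g₁ : F ⟶ D₁} {h₁ : D₁ ⟶ E₁⟦(1 : ℤ)⟧} {f₂ : E₂ ⟶ D₁}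
    {g₂ : D₁ ⟶ D₂} {h₂ : D₂ ⟶ E₂⟦(1 : ℤ)⟧}
    (H₁ : IsDist f₁ g₁ h₁) (H₂ : IsDist f₂ g₂ h₂) {n : ℤ} (hD₂ : D₂ ∈ R n) :
    ∃ (E D : T) (p : E₁ ⟶ E) (q : E ⟶ E₂) (r : E₂ ⟶ E₁⟦(1 : ℤ)⟧) (b : E ⟶ F) (d : F ⟶ D)
      (c : D ⟶ E⟦(1 : ℤ)⟧), IsDist p q r ∧ IsDist b d c ∧ D ∈ R n := by
  obtain ⟨E, p, q, (HE : IsDist p q (f₂ ≫ h₁))⟩ := distinguished_cocone_triangle₂ (f₂ ≫ h₁)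
  have comm₃ : (f₂ ≫ h₁) ≫ (𝟙 E₁)⟦(1 : ℤ)⟧' = f₂ ≫ h₁ := by
    rw [CategoryTheory.Functor.map_id, Category.comp_id]
  obtain ⟨b, comm₁, comm₂⟩ := HE.exists_mor₂ H₁ (𝟙 E₁) f₂ comm₃
  obtain ⟨D, d, c, (HD : IsDist b d c)⟩ := distinguished_cocone_triangle b
  refine ⟨E, D, p, q, _, b, d, c, HE, HD, ?_⟩
  rw [← hR.orth]
  exact fun w hw => (coneOrth_iff HD).1 <| .of_triangle HE H₁ comm₁ comm₂ comm₃ (coneOrth_id _ _)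
    ((coneOrth_iff H₂).2 (hw _ hD₂))

end Composition

section Backward

variable {C} {G F : C} {R : ℤ → Set C} {A : ℤ}

lemma IsGPreApprox.coTMetric_subset (h : IsGPreApprox C (genSeqPos C G) R A) (i : ℤ) :
    coTMetric (generatedCoaisle G) (i + A) ⊆ R i := by
  intro X hX
  rw [mem_coTMetric_generatedCoaisle_iff] at hX
  rw [← h.orthMetric.orth]
  refine fun w hw => hX w fun m hm => hw _ (h.cond1 i ?_).1
  rw [MG_genSeqPos]
  exact subset_smd _ (.of (shift_mem_shifts hm))

namespace IsGApproxBy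

variable {Q : C → Set ℤ → ℕ → Set C} {dom : (ℤ → Set C) → Set C}

lemma exists_coneOrth (hQ : IsApproxClass Q) (h : IsGApproxBy Q dom G R A) {i : ℤ}
    (hF : F ∈ R i ∩ dom R) :
    ∃ (D : C) (g : F ⟶ D), D ∈ R (i + 1) ∩ dom R ∧
      ∀ w ∈ shiftOrth G (A - i), ConeOrth g (w⟦(1 : ℤ)⟧) := by
  obtain ⟨E, D, f, g, k, (H : IsDist f g k), hE, hD⟩ := h.approx i F hF
  refine ⟨D, g, hD, fun w hw => (coneOrth_iff H.rotate).2 <| (homOrth_shift_iff 1).2 ?_⟩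
  exact (hQ.subset_bigClass _ _ _ hE).homOrth fun u hu =>
    homOrth_of_mem_shifts (fun m hm => hw m hm.2) hu

-- The approximations of `F` form a tower whose homotopy colimit vanishes, because its terms are
-- eventually orthogonal to each `ΣᵐG`. Hence `F` is built from the approximating objects.
lemma subset_coTMetric (hQ : IsApproxClass Q) (hG : IsCompactGenerator C G)
    (h : IsGApproxBy Q dom G R A) (i : ℤ) :
    R (i + A) ∩ dom R ⊆ coTMetric (generatedCoaisle G) i := by
  intro F hF
  rw [mem_coTMetric_generatedCoaisle_iff]
  intro w hw
  have exists_next (n : ℕ) (X : {X // X ∈ R (i + A + n) ∩ dom R}) :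
      ∃ (D : {X // X ∈ R (i + A + (n + 1 : ℕ)) ∩ dom R}) (g : X.1 ⟶ D.1),
        ConeOrth g (w⟦(1 : ℤ)⟧) := by
    obtain ⟨D, g, hD, hg⟩ := h.exists_coneOrth hQ X.2
    exact ⟨⟨D, by rwa [Nat.cast_succ, ← add_assoc]⟩, g, hg w fun m hm => hw m (by lia)⟩
  choose D g hg using exists_next
  let Y : ∀ n : ℕ, {X // X ∈ R (i + A + n) ∩ dom R} :=
    fun n => Nat.rec ⟨F, by rwa [Nat.cast_zero, add_zero]⟩ D n
  obtain ⟨H, π, δ, hH⟩ := exists_isHocolim (fun n => (Y n).1) fun n => g n (Y n)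
  have hH₀ : IsZero H := hG.2 H fun m => hH.homOrth (hG.1.shift m) (m := (-i - m).toNat)
    fun n hn x => by
      rw [h.hom_vanish m (i + A + n) (by lia) _ ⟨Iso.refl _⟩ _ (Y n).2.1 x, zero_comp]
  obtain ⟨K, p, q, (HK : IsDist _ p q)⟩ :=
    distinguished_cocone_triangle (seqInj C (fun n => (Y n).1) 0 ≫ π)
  have hK : HomOrth K (w⟦(1 : ℤ)⟧) :=
    (coneOrth_iff HK).1 (hH.coneOrth fun n => hg n (Y n))
  exact (homOrth_shift_iff 1).1 <|
    .ext_left HK.rotate.rotate hK (.of_isZero_left ((shiftFunctor C (1 : ℤ)).map_isZero hH₀))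

lemma approxTriangle_iterate (hQ : IsApproxClass Q) (h : IsGApproxBy Q dom G R A)
    (htri : IsTriangulatedClass (dom R)) {i : ℤ} (hF : F ∈ R i ∩ dom R) (N : ℕ) :
    approxTriangle C F (Q G (Set.Icc (-A - i - N) (A - i)) (N * A.toNat))
      (R (i + N) ∩ dom R) := by
  induction N with
  | zero =>
    rw [zero_mul, Nat.cast_zero, add_zero]
    exact ⟨_, F, _, _, _, isDist_zero_id F, hQ.of_isZero (isZero_zero C), hF⟩
  | succ N ih =>
    obtain ⟨E₁, D₁, f₁, g₁, h₁, (H₁ : IsDist f₁ g₁ h₁), hE₁, hD₁⟩ := ih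
    obtain ⟨E₂, D₂, f₂, g₂, h₂, (H₂ : IsDist f₂ g₂ h₂), hE₂, hD₂⟩ := h.approx _ D₁ hD₁
    obtain ⟨E, D, p, q, r, b, d, c, HE, HD, hD⟩ := h.orthMetric.exists_isDist_comp H₁ H₂ hD₂.1
    have hE : E ∈ dom R := htri.ext HE (htri.fiber H₁ hF.2 hD₁.2) (htri.fiber H₂ hD₁.2 hD₂.2)
    refine ⟨E, D, b, d, c, HD, ?_, ?_, htri.cone HD hE hF.2⟩
    · rw [Nat.succ_mul]
      exact hQ.ext HE
        (hQ.mono (Set.Icc_subset_Icc (by push_cast; lia) le_rfl) le_rfl hE₁)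
        (hQ.mono (Set.Icc_subset_Icc (by push_cast; lia) (by lia)) le_rfl hE₂)
    · rwa [Nat.cast_succ, ← add_assoc]

lemma isCoPreApprox (hG : IsCompactGenerator C G) (h : IsGApproxBy Q dom G R A) {A' : ℤ}
    (hA' : 2 * A ≤ A') : IsCoPreApprox G A' (generatedCoaisle G) (shiftOrth G (-1)) where
  generator := hG
  pos := by have := h.A_pos; lia
  coT := isCoTStructure_generatedCoaisle hG.1
  mem w hw := hw _ (by have := h.A_pos; lia)
  orth X hX Y hY := by
    rw [← (isCoTStructure_generatedCoaisle hG.1).coTMetric_zero, ← neg_add_cancel A] at hY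
    exact h.hom_vanish A' (-A) (by lia) X hX Y (h.coTMetric_subset (-A) hY)

lemma coApproximableBy (hQ : IsApproxClass Q) (hdom : IsApproxDomain dom)
    (hG : IsCompactGenerator C G) (h : IsGApproxBy Q dom G R A) : CoApproximableBy Q dom := by
  have hv := h.toIsGPreApprox.eventuallyOrth hG
  have hdom_eq : dom R = dom (coTMetric (generatedCoaisle G)) :=
    hdom.eq_of_interleaved h.orthMetric hv h.coTMetric_subset (h.subset_coTMetric hQ hG)
  obtain ⟨a, rfl⟩ := Int.eq_ofNat_of_zero_le h.A_pos.le
  refine ⟨G, ((2 * a + 1) * a + (2 * a + 1) : ℕ), _, _,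
    h.isCoPreApprox hG (by push_cast; nlinarith), ?_⟩
  rw [← hdom_eq]
  rintro F ⟨hFU, hF⟩
  have hFR : F ∈ R (-a) := by
    rw [← (isCoTStructure_generatedCoaisle hG.1).coTMetric_zero, ← neg_add_cancel (a : ℤ)] at hFU
    exact h.coTMetric_subset (-a) hFU
  obtain ⟨E, D, f, g, k, H, hE, hD⟩ := h.approxTriangle_iterate hQ
    (hdom.isTriangulatedClass h.orthMetric hv) ⟨hFR, hF⟩ (2 * a + 1)
  rw [show (-a + (2 * a + 1 : ℕ) : ℤ) = 1 + a by push_cast; ring] at hD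
  refine ⟨E, D, f, g, k, H, hQ.mono (Set.Icc_subset_Icc ?_ ?_) ?_ hE,
    h.subset_coTMetric hQ hG 1 hD, hD.2⟩
  · push_cast; nlinarith
  · push_cast; nlinarith
  · simp only [Int.toNat_natCast]; lia

end IsGApproxBy

end Backward

/-! ### The two theories compared -/

section ApproxTriangle

variable {T : Type u} [Category.{v} T] [HasZeroObject T] [HasShift T ℤ] [Preadditive T]
  [∀ n : ℤ, (shiftFunctor T n).Additive] [Pretriangulated T]

lemma approxTriangle_mono {F : T} {S S' D : Set T} (hS : S ⊆ S') :
    approxTriangle T F S D → approxTriangle T F S' D :=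
  fun ⟨E, X, f, g, h, H, hE, hX⟩ => ⟨E, X, f, g, h, H, hS hE, hX⟩

end ApproxTriangle

section Translation

variable {C} {G : C}

theorem coApproximableBy_iff_exists_isGApproxBy {Q : C → Set ℤ → ℕ → Set C}
    {dom : (ℤ → Set C) → Set C} (hQ : IsApproxClass Q) (hdom : IsApproxDomain dom)
    (hG : IsCompactGenerator C G) :
    CoApproximableBy Q dom ↔ ∃ R A, IsGApproxBy Q dom G R A :=
  ⟨fun h => h.exists_isGApproxBy hQ hdom hG, fun ⟨_, _, h⟩ => h.coApproximableBy hQ hdom hG⟩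

lemma gBarInt_genSeqPos (G : C) (a b : ℤ) (k : ℕ) :
    gBarInt C (genSeqPos C G) a b = bigClass G (Set.Icc a b) k := by
  rw [gBarInt, unionIcc_genSeqPos, bigClass]

lemma gBarIntPow_genSeqPos (G : C) (a b k : ℤ) :
    gBarIntPow C (genSeqPos C G) a b k = powClass G (Set.Icc a b) k.toNat := by
  rw [gBarIntPow, unionIcc_genSeqPos, powClass]

lemma gBarIntPow_subset_gBarInt (G : C) (a b k : ℤ) :
    gBarIntPow C (genSeqPos C G) a b k ⊆ gBarInt C (genSeqPos C G) a b :=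
  fun _ => bigClosure_of_mem_smd_coprodPowBig

lemma exists_isCoPreApprox_iff {P : C → ℤ → Set C → Prop} :
    (∃ (H : C) (A : ℤ) (U V : Set C), IsCompactGenerator C H ∧ 0 < A ∧ IsCoTStructure C U V ∧
      H⟦-A⟧ ∈ U ∧ homZero C (singletonShift C H A) U ∧ P H A U) ↔
    ∃ (H : C) (A : ℤ) (U V : Set C), IsCoPreApprox H A U V ∧ P H A U :=
  ⟨fun ⟨H, A, U, V, h₁, h₂, h₃, h₄, h₅, h⟩ => ⟨H, A, U, V, ⟨h₁, h₂, h₃, h₄, h₅⟩, h⟩,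
    fun ⟨H, A, U, V, ⟨h₁, h₂, h₃, h₄, h₅⟩, h⟩ => ⟨H, A, U, V, h₁, h₂, h₃, h₄, h₅, h⟩⟩

lemma coApproximableBy_univ_iff {Q : C → Set ℤ → ℕ → Set C} :
    CoApproximableBy Q (fun _ => Set.univ) ↔
      ∃ (H : C) (A : ℤ) (U V : Set C), IsCoPreApprox H A U V ∧
        ∀ F ∈ U, approxTriangle C F (Q H (Set.Icc (-A) A) A.toNat) (coTMetric U 1) := by
  simp only [CoApproximableBy, Set.inter_univ]

lemma weaklyCoApproximable_iff :
    WeaklyCoApproximable C ↔ CoApproximableBy (C := C) bigClass fun _ => Set.univ := by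
  rw [coApproximableBy_univ_iff, WeaklyCoApproximable, exists_isCoPreApprox_iff]
  simp only [gBarInt_genSeqPos _ _ _ 0]
  rfl

lemma coApproximable_iff :
    CoApproximable C ↔ CoApproximableBy (C := C) powClass fun _ => Set.univ := by
  rw [coApproximableBy_univ_iff, CoApproximable, exists_isCoPreApprox_iff]
  simp only [gBarIntPow_genSeqPos]
  rfl

lemma weaklyCoQuasiApproximable_iff :
    WeaklyCoQuasiApproximable C ↔ CoApproximableBy (C := C) bigClass (closCompacts C) := by
  rw [WeaklyCoQuasiApproximable, exists_isCoPreApprox_iff]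
  simp only [gBarInt_genSeqPos _ _ _ 0]
  rfl

lemma coQuasiApproximable_iff :
    CoQuasiApproximable C ↔ CoApproximableBy (C := C) powClass (closCompacts C) := by
  rw [CoQuasiApproximable, exists_isCoPreApprox_iff]
  simp only [gBarIntPow_genSeqPos]
  rfl

variable {R : ℤ → Set C} {A : ℤ}

lemma isWeakGApprox_iff :
    IsWeakGApprox C (genSeqPos C G) R A ↔ IsGApproxBy bigClass (fun _ => Set.univ) G R A := by
  have e (i : ℤ) := gBarInt_genSeqPos G (-A - i) (A - i) A.toNat
  exact ⟨fun ⟨h₁, h₂, h₃⟩ => ⟨h₁, h₂, by simpa only [e, Set.inter_univ] using h₃⟩,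
    fun ⟨h₁, h₂, h₃⟩ => ⟨h₁, h₂, by simpa only [e, Set.inter_univ] using h₃⟩⟩

lemma isWeakGQuasiApprox_iff :
    IsWeakGQuasiApprox C (genSeqPos C G) R A ↔ IsGApproxBy bigClass (closCompacts C) G R A := by
  have e (i : ℤ) := gBarInt_genSeqPos G (-A - i) (A - i) A.toNat
  exact ⟨fun ⟨h₁, h₂, h₃⟩ => ⟨h₁, h₂, by simpa only [e] using h₃⟩,
    fun ⟨h₁, h₂, h₃⟩ => ⟨h₁, h₂, by simpa only [e] using h₃⟩⟩

lemma isGApprox_iff :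
    IsGApprox C (genSeqPos C G) R A ↔ IsGApproxBy powClass (fun _ => Set.univ) G R A := by
  refine ⟨fun ⟨⟨h₁, h₂, _⟩, h₃⟩ => ⟨h₁, h₂, ?_⟩, fun ⟨h₁, h₂, h₃⟩ => ?_⟩
  · simpa only [gBarIntPow_genSeqPos, Set.inter_univ] using h₃
  · simp only [← gBarIntPow_genSeqPos, Set.inter_univ] at h₃
    exact ⟨⟨h₁, h₂, fun i F hF =>
      approxTriangle_mono (gBarIntPow_subset_gBarInt _ _ _ _) (h₃ i F hF)⟩, h₃⟩

lemma isGQuasiApprox_iff :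
    IsGQuasiApprox C (genSeqPos C G) R A ↔ IsGApproxBy powClass (closCompacts C) G R A := by
  refine ⟨fun ⟨⟨h₁, h₂, _⟩, h₃⟩ => ⟨h₁, h₂, ?_⟩, fun ⟨h₁, h₂, h₃⟩ => ?_⟩
  · simpa only [gBarIntPow_genSeqPos] using h₃
  · simp only [← gBarIntPow_genSeqPos] at h₃
    exact ⟨⟨h₁, h₂, fun i F hF =>
      approxTriangle_mono (gBarIntPow_subset_gBarInt _ _ _ _) (h₃ i F hF)⟩, h₃⟩

end Translation

theorem statement_14 (G₀ : C)
    (hcg : CompactlyGenerated C) (hgen : IsCompactGenerator C G₀) :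
    IsGenSeq C (genSeqPos C G₀) ∧
    (WeaklyCoApproximable C ↔
      ∃ (Rm : ℤ → Set C) (A : ℤ), IsWeakGApprox C (genSeqPos C G₀) Rm A) ∧
    (CoApproximable C ↔
      ∃ (Rm : ℤ → Set C) (A : ℤ), IsGApprox C (genSeqPos C G₀) Rm A) ∧
    (WeaklyCoQuasiApproximable C ↔
      ∃ (Rm : ℤ → Set C) (A : ℤ), IsWeakGQuasiApprox C (genSeqPos C G₀) Rm A) ∧
    (CoQuasiApproximable C ↔
      ∃ (Rm : ℤ → Set C) (A : ℤ), IsGQuasiApprox C (genSeqPos C G₀) Rm A) := by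
  simp only [weaklyCoApproximable_iff, coApproximable_iff, weaklyCoQuasiApproximable_iff,
    coQuasiApproximable_iff, isWeakGApprox_iff, isGApprox_iff, isWeakGQuasiApprox_iff,
    isGQuasiApprox_iff]
  exact ⟨isGenSeq_genSeqPos hgen,
    coApproximableBy_iff_exists_isGApproxBy isApproxClass_bigClass isApproxDomain_univ hgen,
    coApproximableBy_iff_exists_isGApproxBy isApproxClass_powClass isApproxDomain_univ hgen,
    coApproximableBy_iff_exists_isGApproxBy isApproxClass_bigClass isApproxDomain_closCompacts hgen,
    coApproximableBy_iff_exists_isGApproxBy isApproxClass_powClass isApproxDomain_closCompacts hgen⟩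

end GApprox
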